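/- arXiv:2107.04325 — 3 statements merged into one kernel-verified Lean document; each statement's English description precedes it below -/
import Mathlib

section
/- In the chain setup, fix 0 ≤ t < s ≤ T, set δ_{1j} := C₁ for all j and δ_{ij} := C̄ (s−t)^{(1+α(j−2))/(α β^j)} for 2 ≤ i ≤ j ≤ n, and let F^δ be the multi-scale mollification of F with these scales. Let θ^δ_{t,s}(y) denote the backward flow of ẏ_u = A_u y_u + F^δ(u, y_u) with terminal value y at time s, and let J^δ_{t,s}(y) denote its Jacobian matrix with respect to y. Then, provided the constants C̄ and C₁ are chosen large enough (depending only on the data), there exists c₀ = c₀(T) > 0, independent of t, s, y and of δ, such that det J^δ_{t,s}(y) ≥ c₀ for all y ∈ ℝ^N. -/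
/-!
Reversing time by `r = s - u` turns the backward flow into a forward flow `X_r` of the field
`c = -(A + F^δ)`. Liouville's formula `det ∂X_R = exp (∫ tr ∂c)` then gives
`det ∂X_R ≥ exp (-(τ + 1) R)`, where `R = s - t`, as soon as `|tr ∂c| ≤ τ` (`det_flow_lower_bound`).
Only the measurability of `c` in time and a uniform second order Taylor estimate in space are
available, and differentiability of the flow is assumed at the final time only. The determinant
is therefore followed along the difference quotients `w_ε i r = (X_r (y + ε b_i) - X_r y) / ε`,
which are defined for all `r`: a fencing argument compares `det w_ε` with
`exp (-(τ + 1) r)` for each small `ε`, the extra `1` in the rate absorbing the error of order `ε`,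
and `ε → 0` is taken at `r = R`.

The Taylor estimate comes from differentiating the mollifier (`mollified_taylor`): the derivative
of `z ↦ ∫ ρ(ω) f(z - S ω) dω` in the direction `h` is `∫ ∂ρ(ω)(S⁻¹ h) f(z - S ω) dω`.
The trace only sees the diagonal blocks. Along the `i`-th block one may subtract from
`f(z - S ω)` its value with the variable `ω_i` frozen at `0`, by integration by parts
(`integral_fderiv_smul_eq_zero`), so Hölder continuity of `F_i` in `x_i` alone bounds the `i`-th
diagonal block by a constant times `δ_{ii}^{β_i - 1}` (`mollified_block`). With the prescribed
scales, `(s - t) δ_{ii}^{β_i - 1}` is at most a nonnegative power of `s - t`, by the lower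
bound on `β_i` (`ChainHyp.exponent_nonneg`), so it is bounded in terms of `T`, and so is `τ R`.

The integral equation of the flow involves a Bochner integral whose integrability is not assumed;
it follows from the equation itself because the field has linear growth
(`flow_intervalIntegrable`). Blocks are indexed from `0` throughout.
-/

open MeasureTheory Real Set

noncomputable section

/-- The product state space `ℝ^N = ℝ^{d 0} × ⋯ × ℝ^{d (n-1)}`,
the `i`-th block having dimension `d i`. -/
abbrev E (n : ℕ) (d : Fin n → ℕ) : Type := ∀ i : Fin n, Fin (d i) → ℝ

/-- The action of the inverse intrinsic scale matrix `𝕋_h⁻¹ = h^{-1/α} 𝕄_h⁻¹`: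
it rescales the `i`-th block (0-indexed) by `h^{-(1/α + i)}`. -/
def Tinv {n : ℕ} {d : Fin n → ℕ} (α h : ℝ) (x : E n d) : E n d :=
  fun i => (h ^ ((1 : ℝ) / α + ((i : ℕ) : ℝ)))⁻¹ • x i

/-- `det 𝕋_h = h^{∑ i d_i (1/α + i)}` (0-indexed blocks). -/
def detT (n : ℕ) (d : Fin n → ℕ) (α h : ℝ) : ℝ :=
  h ^ (∑ i : Fin n, (d i : ℝ) * ((1 : ℝ) / α + ((i : ℕ) : ℝ)))

/-- A measurable Cauchy–Peano flow for `ẏ_u = A_u y_u + F(u, y_u)` on `[0,T]`: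
`θ_{t,s}(z) = z - ∫_t^s (A_u θ_{u,s}(z) + F(u, θ_{u,s}(z))) du` (signed integral).
For `t ≤ s`, `θ_{t,s}(y)` is the backward flow with terminal value `y` at time `s`,
and `θ_{s,t}(x)` is the forward flow started from `x` at time `t`. -/
def IsFlow {n : ℕ} {d : Fin n → ℕ} (T : ℝ) (A : ℝ → E n d →L[ℝ] E n d)
    (F : ℝ → E n d → E n d) (θ : ℝ → ℝ → E n d → E n d) : Prop :=
  Measurable (fun p : ℝ × ℝ × E n d => θ p.1 p.2.1 p.2.2) ∧
  ∀ t s : ℝ, t ∈ Icc (0 : ℝ) T → s ∈ Icc (0 : ℝ) T → ∀ z : E n d,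
    θ t s z = z - ∫ u in t..s, (A u (θ u s z) + F u (θ u s z))

/-- The time-ordered resolvent of `A`, in applied form:
`R_{s,t} x = x + ∫_t^s A_u (R_{u,t} x) du`, i.e. `∂_s R_{s,t} = A_s R_{s,t}`, `R_{t,t} = Id`. -/
def IsResolvent {n : ℕ} {d : Fin n → ℕ} (T : ℝ) (A : ℝ → E n d →L[ℝ] E n d)
    (R : ℝ → ℝ → E n d →L[ℝ] E n d) : Prop :=
  ∀ s t : ℝ, s ∈ Icc (0 : ℝ) T → t ∈ Icc (0 : ℝ) T → ∀ x : E n d,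
    R s t x = x + ∫ u in t..s, A u (R u t x)

/-- The frozen shift `m̃^{τ,ξ}_{s,t}(x) = R_{s,t} x + ∫_t^s R_{s,u} F(u, θ_{u,τ}(ξ)) du`. -/
def shiftm {n : ℕ} {d : Fin n → ℕ} (F : ℝ → E n d → E n d)
    (θ : ℝ → ℝ → E n d → E n d) (R : ℝ → ℝ → E n d →L[ℝ] E n d)
    (τ : ℝ) (ξ : E n d) (s t : ℝ) (x : E n d) : E n d :=
  R s t x + ∫ u in t..s, R s u (F u (θ u τ ξ))

/-- Family of smooth compactly supported probability-density mollifiers. -/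
def IsMollifier {n : ℕ} {d : Fin n → ℕ} (ρ : Fin n → E n d → ℝ) : Prop :=
  ∀ i, ContDiff ℝ (⊤ : ℕ∞) (ρ i) ∧ HasCompactSupport (ρ i) ∧ (∀ ω, 0 ≤ ρ i ω) ∧
    (∫ ω : E n d, ρ i ω) = 1

/-- The multiscale mollification `F^δ` of the drift `F`:
`F_i^δ(t,z) = ∫ F(t, z - δ_{i·} ⋄ ω)_i ρ_i(ω) dω`, block `j` being mollified at scale `δ_{ij}`
(equivalently, the anisotropic convolution of `F_i(t,·)` with the rescaled mollifier). -/
def molF {n : ℕ} {d : Fin n → ℕ} (ρ : Fin n → E n d → ℝ) (δ : Fin n → Fin n → ℝ)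
    (F : ℝ → E n d → E n d) (t : ℝ) (z : E n d) : E n d :=
  fun i => ∫ ω : E n d, ρ i ω • F t (fun j => z j - δ i j • ω j) i

/-- The standing assumptions of the degenerate chain setup: dimensions, sub-criticality,
lower-triangular block structure of `A`, upper-diagonal dependence, boundedness and
anisotropic Hölder continuity of `F` (indices are 0-based: block `i` here is block `i+1`
of the paper). -/
structure ChainHyp (n : ℕ) [NeZero n] (d : Fin n → ℕ) (α T K : ℝ)
    (A : ℝ → E n d →L[ℝ] E n d) (F : ℝ → E n d → E n d) (β : Fin n → ℝ) : Prop where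
  hd : ∀ i, 1 ≤ d i
  hdmono : ∀ i j : Fin n, i ≤ j → d j ≤ d i
  hα₁ : 1 < α
  hα₂ : α < 2
  hT : 0 < T
  hK : 1 ≤ K
  hAmeas : ∀ x : E n d, Measurable fun t => A t x
  hAbdd : ∃ CA : ℝ, ∀ t : ℝ, ‖A t‖ ≤ CA
  hAblock : ∀ (t : ℝ) (i j : Fin n) (v : Fin (d j) → ℝ),
    (j : ℕ) + 1 < (i : ℕ) → A t (Pi.single j v) i = 0
  hFmeas : Measurable fun p : ℝ × E n d => F p.1 p.2
  hFdep : ∀ (i : Fin n) (t : ℝ) (x x' : E n d), (∀ j, i ≤ j → x j = x' j) → F t x i = F t x' i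
  hF0 : ∀ (t : ℝ) (i : Fin n), ‖F t 0 i‖ ≤ K
  hβ0 : 0 < β 0 ∧ β 0 ≤ 1
  hβ : ∀ j : Fin n, 1 ≤ (j : ℕ) →
    (1 + α * (((j : ℕ) : ℝ) - 1)) / (1 + α * ((j : ℕ) : ℝ)) < β j ∧ β j ≤ 1
  hHolder : ∃ CH : ℝ, 0 < CH ∧
    (∀ (j : Fin n) (t : ℝ) (x x' : E n d), (∀ k, k ≠ j → x k = x' k) →
      ‖F t x 0 - F t x' 0‖ ≤ CH * ‖x j - x' j‖ ^ (β 0)) ∧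
    ∀ (i j : Fin n), 1 ≤ (i : ℕ) → i ≤ j → ∀ (t : ℝ) (x x' : E n d),
      (∀ k, k ≠ j → x k = x' k) →
      ‖F t x i - F t x' i‖ ≤ CH * ‖x j - x' j‖ ^ (β j)

/-! ### Gronwall's inequality and multilinear facts on determinants -/

/-- Gronwall's inequality in integral form. -/
lemma integral_gronwall {φ : ℝ → ℝ} {a L R : ℝ} (hL : 0 ≤ L)
    (hφ : ContinuousOn φ (Icc 0 R)) (h : ∀ r ∈ Icc 0 R, φ r ≤ a + L * ∫ u in (0:ℝ)..r, φ u) :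
    ∀ r ∈ Icc 0 R, φ r ≤ a * exp (L * r) := by
  intro r hr
  have hR : 0 ≤ R := hr.1.trans hr.2
  set φ' : ℝ → ℝ := IccExtend hR (fun x => φ x) with hφ'
  have hc : Continuous φ' := (continuousOn_iff_continuous_domRestrict.1 hφ).Icc_extend'
  have heq : ∀ x ∈ Icc 0 R, φ' x = φ x := fun x hx => IccExtend_of_mem hR _ hx
  have hint : ∀ x ∈ Icc 0 R, ∫ u in (0:ℝ)..x, φ u = ∫ u in (0:ℝ)..x, φ' u := by
    intro x hx
    refine intervalIntegral.integral_congr fun u hu => ?_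
    rw [uIcc_of_le hx.1] at hu
    exact (heq u ⟨hu.1, hu.2.trans hx.2⟩).symm
  have hd : ∀ x, HasDerivAt (fun r => a + L * ∫ u in (0:ℝ)..r, φ' u) (L * φ' x) x := fun x =>
    ((hc.integral_hasStrictDerivAt 0 x).hasDerivAt.const_mul L).const_add a
  have := le_gronwallBound_of_liminf_deriv_right_le
    (f := fun r => a + L * ∫ u in (0:ℝ)..r, φ' u) (f' := fun x => L * φ' x)
    (δ := a) (K := L) (ε := 0) (a := 0) (b := R)
    (fun x _ => (hd x).continuousAt.continuousWithinAt)
    (fun x _ r hr => (hd x).hasDerivWithinAt.liminf_right_slope_le hr) (by simp)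
    (fun x hx => by
      have hx' : x ∈ Icc 0 R := ⟨hx.1, hx.2.le⟩
      rw [add_zero]
      refine mul_le_mul_of_nonneg_left ?_ hL
      rw [heq x hx', ← hint x hx']
      exact h x hx') r hr
  rw [gronwallBound_ε0, sub_zero, ← hint r hr] at this
  exact (h r hr).trans this

/-- The derivative of `det` at `w` in the direction `B w` is `tr B * det w`, also for linearly
dependent `w`; this is the algebraic content of Liouville's formula. -/
lemma sum_det_update_eq_trace {V ι : Type*} [AddCommGroup V] [Module ℝ V] [Fintype ι]
    [DecidableEq ι] (b : Module.Basis ι ℝ V) (B : V →ₗ[ℝ] V) (w : ι → V) :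
    ∑ i, b.det (Function.update w i (B (w i))) = LinearMap.trace ℝ V B * b.det w := by
  have h1 : ∀ i, b.det (Function.update w i (B (w i)))
      = ((b.toMatrix w).adjugate * (LinearMap.toMatrix b b B * b.toMatrix w)) i i := by
    intro i
    rw [Module.Basis.det_apply, b.toMatrix_update, ← Matrix.cramer_apply,
      Matrix.cramer_eq_adjugate_mulVec, Matrix.mul_apply, Matrix.mulVec, dotProduct]
    refine Finset.sum_congr rfl fun k _ => ?_
    congr 1
    rw [← LinearMap.toMatrix_mulVec_repr b b B (w i)]
    rfl
  simp_rw [h1]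
  change Matrix.trace _ = _
  rw [Matrix.trace_mul_comm, Matrix.mul_assoc, Matrix.mul_adjugate, Module.Basis.det_apply,
    LinearMap.trace_eq_matrix_trace ℝ b]
  simp [Matrix.trace_smul, mul_comm]

/-- The determinant in the basis `b`, as a continuous multilinear form. -/
def detCM {V ι : Type*} [NormedAddCommGroup V] [NormedSpace ℝ V] [FiniteDimensional ℝ V]
    [Fintype ι] [DecidableEq ι] (b : Module.Basis ι ℝ V) :
    ContinuousMultilinearMap ℝ (fun _ : ι => V) ℝ :=
  { b.det.toMultilinearMap with
    cont := by
      change Continuous fun v : ι → V => b.det v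
      simp_rw [Module.Basis.det_apply]
      refine Continuous.matrix_det ?_
      refine continuous_matrix fun i j => ?_
      exact ((b.coord i).continuous_of_finiteDimensional).comp (continuous_apply j) }

lemma detCM_apply {V ι : Type*} [NormedAddCommGroup V] [NormedSpace ℝ V] [FiniteDimensional ℝ V]
    [Fintype ι] [DecidableEq ι] (b : Module.Basis ι ℝ V) (v : ι → V) :
    detCM b v = b.det v := rfl

/-- The derivative of a multilinear form is bounded on balls. -/
lemma exists_linearDeriv_bound {V ι : Type*} [NormedAddCommGroup V] [NormedSpace ℝ V]
    [FiniteDimensional ℝ V]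
    [Fintype ι] [DecidableEq ι] (D : ContinuousMultilinearMap ℝ (fun _ : ι => V) ℝ) (K : ℝ) :
    ∃ C, 0 < C ∧ ∀ w e : ι → V, ‖w‖ ≤ K → |D.linearDeriv w e| ≤ C * ‖e‖ := by
  have hc : Continuous fun w : ι → V => D.linearDeriv w := by
    have : (fun w : ι → V => D.linearDeriv w) = fderiv ℝ D := by
      ext1 w
      exact (D.hasFDerivAt (x := w)).fderiv.symm
    rw [this]
    exact (D.contDiff (n := 1)).continuous_fderiv (by norm_num)
  have : FiniteDimensional ℝ (ι → V) := inferInstance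
  have : ProperSpace (ι → V) := FiniteDimensional.proper ℝ _
  obtain ⟨C, hC⟩ := (isCompact_closedBall (0 : ι → V) K).exists_bound_of_continuousOn
    hc.continuousOn
  refine ⟨max C 1, by positivity, fun w e hw => ?_⟩
  have h1 := hC w (by simpa using hw)
  calc |D.linearDeriv w e| ≤ ‖D.linearDeriv w‖ * ‖e‖ := (D.linearDeriv w).le_opNorm e
    _ ≤ _ := by gcongr; exact h1.trans (le_max_left _ _)

/-! ### Determinants of flows -/

section flow
variable {V : Type*} [NormedAddCommGroup V] [NormedSpace ℝ V]

lemma flow_continuousOn {c X : ℝ → V → V} {R : ℝ} (hR : 0 ≤ R) (z : V)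
    (hint : IntervalIntegrable (fun u => c u (X u z)) volume 0 R)
    (hX : ∀ r ∈ Icc 0 R, X r z = z + ∫ u in (0:ℝ)..r, c u (X u z)) :
    ContinuousOn (fun r => X r z) (Icc 0 R) := by
  have h1 := intervalIntegral.continuousOn_primitive_interval' hint left_mem_uIcc
  rw [uIcc_of_le hR] at h1
  exact (continuousOn_const.add h1).congr hX

lemma intervalIntegrable_sub_zero {V : Type*} [NormedAddCommGroup V] {f : ℝ → V} {R : ℝ}
    (hint : IntervalIntegrable f volume 0 R) {p q : ℝ} (hp : p ∈ Icc 0 R) (hq : q ∈ Icc 0 R) : IntervalIntegrable f volume p q := by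
  refine hint.mono_set ?_
  rw [uIcc_of_le (hp.1.trans hp.2)]
  exact uIcc_subset_Icc hp hq

lemma flow_lipschitz {c X : ℝ → V → V} {R L : ℝ} (hR : 0 ≤ R) (hL : 0 ≤ L)
    (hLip : ∀ u x y, ‖c u x - c u y‖ ≤ L * ‖x - y‖)
    (hint : ∀ z, IntervalIntegrable (fun u => c u (X u z)) volume 0 R)
    (hX : ∀ r ∈ Icc 0 R, ∀ z, X r z = z + ∫ u in (0:ℝ)..r, c u (X u z)) (z z' : V) :
    ∀ r ∈ Icc 0 R, ‖X r z - X r z'‖ ≤ ‖z - z'‖ * exp (L * R) := by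
  have hc : ∀ z, ContinuousOn (fun r => X r z) (Icc 0 R) := fun z =>
    flow_continuousOn hR z (hint z) fun r hr => hX r hr z
  have hcφ : ContinuousOn (fun r => ‖X r z - X r z'‖) (Icc 0 R) := ((hc z).sub (hc z')).norm
  intro r hr
  refine (integral_gronwall hL hcφ (a := ‖z - z'‖) (fun r hr => ?_) r hr).trans ?_
  · have h0 : (0:ℝ) ∈ Icc 0 R := ⟨le_rfl, hR⟩
    have e : X r z - X r z' = (z - z') + ∫ u in (0:ℝ)..r, (c u (X u z) - c u (X u z')) := by
      rw [intervalIntegral.integral_sub (intervalIntegrable_sub_zero (hint z) h0 hr)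
        (intervalIntegrable_sub_zero (hint z') h0 hr), hX r hr z, hX r hr z']
      abel
    rw [e]
    refine (norm_add_le _ _).trans (add_le_add le_rfl ?_)
    rw [← intervalIntegral.integral_const_mul]
    refine intervalIntegral.norm_integral_le_of_norm_le hr.1
      (Filter.Eventually.of_forall fun u _ => hLip u _ _) ?_
    refine ContinuousOn.intervalIntegrable ?_
    rw [uIcc_of_le hr.1]
    exact (continuousOn_const.mul hcφ).mono (Icc_subset_Icc_right hr.2)
  · gcongr
    exact hr.2

/-- A Liouville lower bound for the Jacobian of a flow whose field is merely integrable in time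
along trajectories and differentiable in space with a uniform quadratic Taylor remainder. The flow
needs to be differentiable only at the final time, and only at the point considered. -/
theorem det_flow_lower_bound [FiniteDimensional ℝ V] {ι : Type*} [Fintype ι]
    [DecidableEq ι] (b : Module.Basis ι ℝ V)
    {c X : ℝ → V → V} {R L M τ : ℝ} (hR : 0 ≤ R) (hL : 0 ≤ L) (hM : 0 ≤ M) (hτ : 0 ≤ τ)
    (hLip : ∀ u x y, ‖c u x - c u y‖ ≤ L * ‖x - y‖)
    (hB : ∀ u x, ∃ B : V →L[ℝ] V, ‖B‖ ≤ L ∧ |LinearMap.trace ℝ V B.toLinearMap| ≤ τ ∧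
      ∀ h, ‖h‖ ≤ 1 → ‖c u (x + h) - c u x - B h‖ ≤ M * ‖h‖ ^ 2)
    (hint : ∀ z, IntervalIntegrable (fun u => c u (X u z)) volume 0 R)
    (hX : ∀ r ∈ Icc 0 R, ∀ z, X r z = z + ∫ u in (0:ℝ)..r, c u (X u z))
    {J : V →L[ℝ] V} {y : V} (hJ : HasFDerivAt (X R) J y) :
    exp (-(τ + 1) * R) ≤ LinearMap.det J.toLinearMap := by
  have h0 : (0:ℝ) ∈ Icc 0 R := ⟨le_rfl, hR⟩
  set D := detCM b with hD
  -- a bound for the difference quotients of the flow along the basis directions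
  set K : ℝ := ‖(b : ι → V)‖ * exp (L * R) with hK
  have hK0 : 0 ≤ K := by positivity
  obtain ⟨C, hC0, hC⟩ := exists_linearDeriv_bound D K
  -- difference quotients of the flow, and of the field along the flow
  set w : ℝ → ℝ → ι → V := fun ε r i => ε⁻¹ • (X r (y + ε • b i) - X r y) with hw
  set q : ℝ → ℝ → ι → V := fun ε r i =>
    ε⁻¹ • (c r (X r (y + ε • b i)) - c r (X r y)) with hq
  have hXK : ∀ ε > 0, ∀ r ∈ Icc 0 R, ∀ i, ‖X r (y + ε • b i) - X r y‖ ≤ ε * K := by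
    intro ε hε r hr i
    refine (flow_lipschitz hR hL hLip hint hX _ _ r hr).trans ?_
    rw [add_sub_cancel_left, norm_smul, Real.norm_of_nonneg hε.le, mul_assoc, hK]
    gcongr
    exact norm_le_pi_norm (b : ι → V) i
  have hwK : ∀ ε > 0, ∀ r ∈ Icc 0 R, ‖w ε r‖ ≤ K := by
    intro ε hε r hr
    refine (pi_norm_le_iff_of_nonneg hK0).2 fun i => ?_
    simp only [hw]
    rw [norm_smul, norm_inv, Real.norm_of_nonneg hε.le, inv_mul_le_iff₀ hε]
    exact hXK ε hε r hr i
  have hqw : ∀ ε r i, ‖q ε r i‖ ≤ L * ‖w ε r i‖ := by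
    intro ε r i
    simp only [hq, hw]
    rw [norm_smul, norm_smul, mul_left_comm]
    gcongr
    exact hLip _ _ _
  have hqK : ∀ ε > 0, ∀ r ∈ Icc 0 R, ‖q ε r‖ ≤ L * K := by
    intro ε hε r hr
    refine (pi_norm_le_iff_of_nonneg (by positivity)).2 fun i => (hqw ε r i).trans ?_
    gcongr
    exact (norm_le_pi_norm _ i).trans (hwK ε hε r hr)
  have hqint : ∀ ε, ∀ p ∈ Icc 0 R, ∀ r ∈ Icc 0 R, IntervalIntegrable (q ε) volume p r := by
    intro ε p hp r hr
    refine intervalIntegrable_sub_zero ?_ hp hr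
    rw [intervalIntegrable_iff, IntegrableOn, integrable_pi_iff]
    intro i
    exact ((hint (y + ε • b i)).sub (hint y)).smul ε⁻¹ |>.def'
  have hwq : ∀ ε > 0, ∀ p ∈ Icc 0 R, ∀ r ∈ Icc 0 R, w ε r - w ε p = ∫ u in p..r, q ε u := by
    intro ε hε p hp r hr
    ext1 i
    have e1 := ContinuousLinearMap.intervalIntegral_comp_comm
      (ContinuousLinearMap.proj (R := ℝ) (φ := fun _ : ι => V) i) (hqint ε p hp r hr)
    simp only [ContinuousLinearMap.proj_apply] at e1
    rw [← e1]
    have i1 := fun z => intervalIntegrable_sub_zero (hint z) h0 hr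
    have i2 := fun z => intervalIntegrable_sub_zero (hint z) h0 hp
    have i3 := fun z => intervalIntegrable_sub_zero (hint z) hp hr
    simp only [hq, hw, Pi.sub_apply]
    rw [intervalIntegral.integral_smul, intervalIntegral.integral_sub (i3 _) (i3 _),
      ← intervalIntegral.integral_interval_sub_left (i1 (y + ε • b i)) (i2 _),
      ← intervalIntegral.integral_interval_sub_left (i1 y) (i2 _), ← smul_sub]
    congr 1
    rw [hX r hr, hX r hr, hX p hp, hX p hp]
    abel
  have hwLip : ∀ ε > 0, ∀ p ∈ Icc 0 R, ∀ r ∈ Icc 0 R, p ≤ r →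
      ‖w ε r - w ε p‖ ≤ L * K * (r - p) := by
    intro ε hε p hp r hr hpr
    rw [hwq ε hε p hp r hr]
    refine (intervalIntegral.norm_integral_le_of_norm_le_const fun u hu => ?_).trans_eq
      (by rw [abs_of_nonneg (sub_nonneg.2 hpr)])
    rw [uIoc_of_le hpr] at hu
    exact hqK ε hε u ⟨hp.1.trans hu.1.le, hu.2.trans hr.2⟩
  -- `q ε u` is `B (w ε p)` up to errors of order `ε` and `u - p`, and along `B (w ε p)` the
  -- derivative of the determinant is `tr B * D (w ε p)`
  have hpt : ∀ ε > 0, ε * K ≤ 1 → ∀ p ∈ Icc 0 R, ∀ u ∈ Icc 0 R, p ≤ u →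
      -(τ * |D (w ε p)| + C * (ε * (M * K ^ 2) + L * (L * K * (u - p))))
        ≤ D.linearDeriv (w ε p) (q ε u) := by
    intro ε hε hεK p hp u hu hpu
    obtain ⟨B, hBL, hBτ, hBM⟩ := hB u (X u y)
    set e : ι → V := fun i => q ε u i - B (w ε p i) with he
    have hqe : q ε u = (fun i => B (w ε p i)) + e := by
      ext1 i; simp [he]
    have he1 : ‖e‖ ≤ ε * (M * K ^ 2) + L * (L * K * (u - p)) := by
      have hup : 0 ≤ u - p := sub_nonneg.2 hpu
      refine (pi_norm_le_iff_of_nonneg (by positivity)).2 fun i => ?_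
      have e1 : e i = (q ε u i - B (w ε u i)) + B (w ε u i - w ε p i) := by
        simp [he]
      rw [e1]
      refine (norm_add_le _ _).trans (add_le_add ?_ ?_)
      · set h := X u (y + ε • b i) - X u y with hh
        have hhK : ‖h‖ ≤ ε * K := hXK ε hε u hu i
        have e2 : q ε u i - B (w ε u i) = ε⁻¹ • (c u (X u y + h) - c u (X u y) - B h) := by
          change ε⁻¹ • (c u (X u (y + ε • b i)) - c u (X u y)) - B (ε⁻¹ • h) = _
          rw [map_smul, ← smul_sub, hh, add_sub_cancel]
        rw [e2, norm_smul, norm_inv, Real.norm_of_nonneg hε.le, inv_mul_le_iff₀ hε]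
        calc _ ≤ M * ‖h‖ ^ 2 := hBM h (hhK.trans hεK)
          _ ≤ M * (ε * K) ^ 2 := by gcongr
          _ = _ := by ring
      · refine (B.le_opNorm _).trans ?_
        gcongr
        exact (norm_le_pi_norm (w ε u - w ε p) i).trans (hwLip ε hε p hp u hu hpu)
    have e3 : D.linearDeriv (w ε p) (fun i => B (w ε p i))
        = LinearMap.trace ℝ V B.toLinearMap * D (w ε p) := by
      rw [ContinuousMultilinearMap.linearDeriv_apply]
      exact sum_det_update_eq_trace b B.toLinearMap (w ε p)
    rw [hqe, map_add, e3, neg_add]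
    refine add_le_add ?_ ?_
    · rw [neg_le]
      refine (neg_le_abs _).trans ?_
      rw [abs_mul]
      gcongr
    · rw [neg_le]
      refine (neg_le_abs _).trans ((hC _ e (hwK ε hε p hp)).trans ?_)
      gcongr
  -- the upper right Dini derivative of `-D (w ε ·)` is at most `τ |D (w ε ·)| + O(ε)`
  have hslope : ∀ ε > 0, ε * K ≤ 1 → ∀ p ∈ Ico 0 R, ∀ κ > 0,
      ∀ᶠ r in nhdsWithin p (Ioi p), slope (fun r => - D (w ε r)) p r
        ≤ τ * |D (w ε p)| + C * (ε * (M * K ^ 2)) + κ := by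
    intro ε hε hεK p hp κ hκ
    have hp' : p ∈ Icc 0 R := ⟨hp.1, hp.2.le⟩
    have hder := (D.hasFDerivAt (x := w ε p)).isLittleO
    have hc0 : 0 < κ / (2 * (L * K + 1)) := by positivity
    have hev := hder.def hc0
    rw [Metric.eventually_nhds_iff] at hev
    obtain ⟨η, hη, hev⟩ := hev
    have hr1 : ∀ᶠ r in nhdsWithin p (Ioi p), r < p + η / (L * K + 1) :=
      nhdsWithin_le_nhds (Iio_mem_nhds (by have : 0 < η / (L * K + 1) := by positivity
                                           linarith))
    have hr2 : ∀ᶠ r in nhdsWithin p (Ioi p), r < p + κ / (2 * (C * (L * (L * K)) + 1)) :=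
      nhdsWithin_le_nhds (Iio_mem_nhds (by
        have : 0 < κ / (2 * (C * (L * (L * K)) + 1)) := by positivity
        linarith))
    have hr3 : ∀ᶠ r in nhdsWithin p (Ioi p), r < R := nhdsWithin_le_nhds (Iio_mem_nhds hp.2)
    filter_upwards [hr1, hr2, hr3, self_mem_nhdsWithin] with r h1 h2 h3 h4
    have h4 : p < r := h4
    have hr : r ∈ Icc 0 R := ⟨hp.1.trans h4.le, h3.le⟩
    have hrp : 0 < r - p := sub_pos.2 h4
    have hΔ := hwLip ε hε p hp' r hr h4.le
    have hΔ' : ‖w ε r - w ε p‖ ≤ (L * K + 1) * (r - p) := hΔ.trans (by gcongr; linarith)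
    have hlo := hev (y := w ε r) (by
      rw [dist_eq_norm]
      refine hΔ'.trans_lt ?_
      have h5 : r - p < η / (L * K + 1) := by linarith
      rw [lt_div_iff₀ (by positivity)] at h5
      linarith)
    have hlo' : ‖D (w ε r) - D (w ε p) - D.linearDeriv (w ε p) (w ε r - w ε p)‖
        ≤ κ / 2 * (r - p) := by
      refine hlo.trans ((mul_le_mul_of_nonneg_left hΔ' hc0.le).trans_eq ?_)
      field_simp
    have hlin : D.linearDeriv (w ε p) (w ε r - w ε p)
        = ∫ u in p..r, D.linearDeriv (w ε p) (q ε u) := by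
      rw [hwq ε hε p hp' r hr, ContinuousLinearMap.intervalIntegral_comp_comm _
        (hqint ε p hp' r hr)]
    have hbd : -(τ * |D (w ε p)| + C * (ε * (M * K ^ 2) + L * (L * K * (r - p)))) * (r - p)
        ≤ D.linearDeriv (w ε p) (w ε r - w ε p) := by
      rw [hlin]
      have := intervalIntegral.integral_mono_on (a := p) (b := r) h4.le (μ := volume)
        (f := fun _ => -(τ * |D (w ε p)| + C * (ε * (M * K ^ 2) + L * (L * K * (r - p)))))
        (g := fun u => D.linearDeriv (w ε p) (q ε u)) intervalIntegrable_const
        (by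
          have hi := hqint ε p hp' r hr
          exact ⟨(D.linearDeriv (w ε p)).integrable_comp hi.1,
            (D.linearDeriv (w ε p)).integrable_comp hi.2⟩)
        (fun u hu => by
          refine le_trans ?_ (hpt ε hε hεK p hp' u ⟨hp.1.trans hu.1, hu.2.trans h3.le⟩ hu.1)
          rw [neg_le_neg_iff]
          gcongr
          exact hu.2)
      rw [intervalIntegral.integral_const, smul_eq_mul] at this
      linarith
    have hκ2 : C * (L * (L * K * (r - p))) ≤ κ / 2 := by
      have h5 : r - p < κ / (2 * (C * (L * (L * K)) + 1)) := by linarith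
      rw [lt_div_iff₀ (by positivity)] at h5
      nlinarith
    rw [slope_def_field, div_le_iff₀ hrp]
    rw [Real.norm_eq_abs] at hlo'
    have := (abs_le.1 hlo').1
    have hfin : C * (L * (L * K * (r - p))) * (r - p) ≤ κ / 2 * (r - p) := by gcongr
    linarith
  -- fencing of `-D (w ε ·)` by `-exp (-(τ + 1) ·)`: at a contact point the derivative of the
  -- fence is strictly larger once the error of order `ε` is below `exp (-(τ + 1) R)`
  have hmain : ∀ ε > 0, ε * K ≤ 1 → C * (ε * (M * K ^ 2)) < exp (-(τ + 1) * R) →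
      exp (-(τ + 1) * R) ≤ D (w ε R) := by
    intro ε hε hεK hεM
    have hDc : ContinuousOn (fun r => - D (w ε r)) (Icc 0 R) := by
      have hXc : ∀ z, ContinuousOn (fun r => X r z) (Icc 0 R) := fun z =>
        flow_continuousOn hR z (hint z) fun r hr => hX r hr z
      refine (D.cont.comp_continuousOn (continuousOn_pi.2 fun i => ?_)).neg
      exact continuousOn_const.smul ((hXc _).sub (hXc _))
    have hBd : ∀ x : ℝ, HasDerivAt (fun x => - exp (-(τ + 1) * x))
        ((τ + 1) * exp (-(τ + 1) * x)) x := by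
      intro x
      have := (((hasDerivAt_id x).const_mul (-(τ + 1))).exp).neg
      convert! this using 1
      simp; ring
    have hw0 : D (w ε 0) = 1 := by
      have : w ε 0 = b := by
        ext1 i
        simp only [hw]
        rw [hX 0 h0, hX 0 h0]
        simp [smul_smul, hε.ne']
      rw [this]
      exact b.det_self
    have := image_le_of_liminf_slope_right_lt_deriv_boundary hDc
      (f' := fun p => τ * |D (w ε p)| + C * (ε * (M * K ^ 2)))
      (fun p hp r hr => by
        refine Filter.Eventually.frequently ?_
        filter_upwards [hslope ε hε hεK p hp ((r - (τ * |D (w ε p)| + C * (ε * (M * K ^ 2)))) / 2)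
          (by linarith)] with z hz
        linarith)
      (B := fun x => - exp (-(τ + 1) * x)) (by simp [hw0]) hBd
      (fun x hx hxB => by
        have hxB' : D (w ε x) = exp (-(τ + 1) * x) := neg_injective hxB
        have : exp (-(τ + 1) * R) ≤ exp (-(τ + 1) * x) := by
          refine exp_le_exp.2 ?_
          have := hx.2
          nlinarith
        simp only [hxB', abs_of_pos (exp_pos _)]
        linarith) ⟨hR, le_rfl⟩
    exact neg_le_neg_iff.1 this
  have hlim : Filter.Tendsto (fun ε => D (w ε R)) (nhdsWithin 0 (Ioi 0))
      (nhds (LinearMap.det J.toLinearMap)) := by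
    have hdet : D (fun i => J (b i)) = LinearMap.det J.toLinearMap := by
      have := b.det_comp J.toLinearMap b
      rw [b.det_self, mul_one] at this
      exact this
    rw [← hdet]
    refine (D.cont.tendsto _).comp (tendsto_pi_nhds.2 fun i => ?_)
    have := (hJ.hasLineDerivAt (b i)).tendsto_slope_zero_right
    simpa [hw] using this
  refine ge_of_tendsto hlim ?_
  have t1 : Filter.Tendsto (fun ε : ℝ => ε * K) (nhdsWithin 0 (Ioi 0)) (nhds 0) := by
    have : Continuous fun ε : ℝ => ε * K := by fun_prop
    simpa using (this.tendsto 0).mono_left nhdsWithin_le_nhds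
  have t2 : Filter.Tendsto (fun ε : ℝ => C * (ε * (M * K ^ 2))) (nhdsWithin 0 (Ioi 0))
      (nhds 0) := by
    have : Continuous fun ε : ℝ => C * (ε * (M * K ^ 2)) := by fun_prop
    simpa using (this.tendsto 0).mono_left nhdsWithin_le_nhds
  filter_upwards [t1.eventually_le_const one_pos, t2.eventually_lt_const (exp_pos _),
    self_mem_nhdsWithin] with ε h1 h2 h3
  exact hmain ε h3 h1 h2

lemma lipschitz_of_taylor {f : V → V} {L M : ℝ}
    (hB : ∀ x, ∃ B : V →L[ℝ] V, ‖B‖ ≤ L ∧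
      ∀ h, ‖h‖ ≤ 1 → ‖f (x + h) - f x - B h‖ ≤ M * ‖h‖ ^ 2) (x y : V) :
    ‖f x - f y‖ ≤ L * ‖x - y‖ := by
  choose B hBL hBM using hB
  refine Convex.norm_image_sub_le_of_norm_hasFDerivWithin_le (f' := B) (s := univ)
    (fun x _ => HasFDerivAt.hasFDerivWithinAt ?_) (fun x _ => hBL x) convex_univ
    (mem_univ y) (mem_univ x)
  rw [hasFDerivAt_iff_isLittleO_nhds_zero]
  refine Asymptotics.IsBigO.trans_isLittleO (g := fun h : V => ‖h‖ ^ 2) ?_ ?_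
  · refine Asymptotics.IsBigO.of_bound M ?_
    filter_upwards [Metric.closedBall_mem_nhds (0 : V) one_pos] with h hh
    rw [Real.norm_of_nonneg (by positivity : (0:ℝ) ≤ ‖h‖ ^ 2)]
    exact hBM x h (by simpa using hh)
  · simpa using Asymptotics.isLittleO_norm_pow_id (E' := V) one_lt_two

/-- Integrability along a solution of the integral equation is automatic for fields of linear
growth. If it failed, let `σ` be the supremum of the times up to which it holds: `x` is continuous
and bounded by Gronwall before `σ`, and constant equal to `z` after `σ`, since the integral of a
non-integrable function is `0`; so `x` is measurable and bounded off `σ`, and the integrand is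
integrable after all. -/
lemma flow_intervalIntegrable [FiniteDimensional ℝ V] [MeasurableSpace V] [BorelSpace V]
    {c : ℝ → V → V} {x : ℝ → V} {z : V} {R C : ℝ} (hR : 0 ≤ R) (hC : 0 ≤ C)
    (hc : Measurable fun p : ℝ × V => c p.1 p.2)
    (hgrowth : ∀ u ∈ Icc 0 R, ∀ x, ‖c u x‖ ≤ C * (1 + ‖x‖))
    (hx : ∀ r ∈ Icc 0 R, x r = z + ∫ u in (0:ℝ)..r, c u (x u)) :
    IntervalIntegrable (fun u => c u (x u)) volume 0 R := by
  have hgr : ∀ r ∈ Icc 0 R, IntervalIntegrable (fun u => c u (x u)) volume 0 r →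
      ContinuousOn x (Icc 0 r) ∧ ‖x r‖ ≤ (1 + ‖z‖) * exp (C * R) := by
    intro r hr hi
    have hsub : Icc 0 r ⊆ Icc 0 R := Icc_subset_Icc_right hr.2
    have hxc : ContinuousOn x (Icc 0 r) :=
      flow_continuousOn (X := fun r _ => x r) (c := c) hr.1 z hi fun p hp => hx p (hsub hp)
    refine ⟨hxc, ?_⟩
    have := integral_gronwall (φ := fun p => 1 + ‖x p‖) (a := 1 + ‖z‖) hC
      (continuousOn_const.add hxc.norm) (fun p hp => by
        rw [add_assoc]
        refine add_le_add le_rfl ?_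
        rw [hx p (hsub hp)]
        refine (norm_add_le _ _).trans (add_le_add le_rfl ?_)
        rw [← intervalIntegral.integral_const_mul]
        refine intervalIntegral.norm_integral_le_of_norm_le hp.1
          (Filter.Eventually.of_forall fun u hu =>
            hgrowth u ⟨hu.1.le, hu.2.trans (hp.2.trans hr.2)⟩ _) ?_
        refine ContinuousOn.intervalIntegrable ?_
        rw [uIcc_of_le hp.1]
        exact (continuousOn_const.mul (continuousOn_const.add hxc.norm)).mono
          (Icc_subset_Icc_right hp.2)) r ⟨hr.1, le_rfl⟩
    have h2 : (1 + ‖z‖) * exp (C * r) ≤ (1 + ‖z‖) * exp (C * R) := by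
      gcongr
      exact hr.2
    linarith
  set S : Set ℝ := {r | r ∈ Icc 0 R ∧
    IntervalIntegrable (fun u => c u (x u)) volume 0 r} with hS
  have h0S : (0:ℝ) ∈ S := ⟨⟨le_rfl, hR⟩, IntervalIntegrable.refl⟩
  have hbdd : BddAbove S := ⟨R, fun r hr => hr.1.2⟩
  set σ := sSup S with hσ
  have hσ0 : 0 ≤ σ := le_csSup hbdd h0S
  have hσR : σ ≤ R := csSup_le ⟨0, h0S⟩ fun r hr => hr.1.2
  have hbelow : ∀ r, 0 ≤ r → r < σ → r ∈ S := by
    intro r h0 hr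
    obtain ⟨r', hr', hlt⟩ := exists_lt_of_lt_csSup ⟨0, h0S⟩ hr
    exact ⟨⟨h0, hlt.le.trans hr'.1.2⟩, intervalIntegrable_sub_zero hr'.2
      ⟨le_rfl, hr'.1.1⟩ ⟨h0, hlt.le⟩⟩
  have habove : ∀ r ∈ Icc 0 R, σ < r → x r = z := by
    intro r hr h
    rw [hx r hr, intervalIntegral.integral_undef, add_zero]
    intro hi
    exact absurd (le_csSup hbdd (show r ∈ S from ⟨hr, hi⟩)) (not_le.2 h)
  -- on `[0, σ)` the trajectory is continuous, and beyond `σ` it is constant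
  have hm1 : AEMeasurable x (volume.restrict (Ico 0 σ)) := by
    refine ContinuousOn.aemeasurable ?_ measurableSet_Ico
    intro r hr
    obtain ⟨r', hr1, hr2⟩ := exists_between hr.2
    have hc' := (hgr r' (hbelow r' (hr.1.trans hr1.le) hr2).1
      (hbelow r' (hr.1.trans hr1.le) hr2).2).1 r ⟨hr.1, hr1.le⟩
    refine hc'.mono_of_mem_nhdsWithin ?_
    have : Iio r' ∈ nhdsWithin r (Ico 0 σ) := nhdsWithin_le_nhds (Iio_mem_nhds hr1)
    filter_upwards [this, self_mem_nhdsWithin] with p hp1 hp2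
    exact ⟨hp2.1, hp1.le⟩
  have hm2 : AEMeasurable x (volume.restrict (Ioc σ R)) := by
    refine (aemeasurable_const (b := z)).congr ?_
    filter_upwards [ae_restrict_mem measurableSet_Ioc] with r hr
    exact (habove r ⟨hσ0.trans hr.1.le, hr.2⟩ hr.1).symm
  have hae : AEMeasurable x (volume.restrict (Ioc 0 R)) := by
    have h3 : AEMeasurable x (volume.restrict {σ}) := by
      rw [Measure.restrict_eq_zero.2 (by simp)]
      exact aemeasurable_zero_measure
    refine (aemeasurable_union_iff.2 ⟨aemeasurable_union_iff.2 ⟨hm1, h3⟩, hm2⟩).mono_set ?_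
    intro r hr
    rcases lt_trichotomy r σ with h | h | h
    · exact Or.inl (Or.inl ⟨hr.1.le, h⟩)
    · exact Or.inl (Or.inr h)
    · exact Or.inr ⟨h, hr.2⟩
  have hbd : ∀ r ∈ Icc 0 R, r ≠ σ → ‖x r‖ ≤ (1 + ‖z‖) * exp (C * R) := by
    intro r hr hne
    rcases lt_or_gt_of_ne hne with h | h
    · exact (hgr r hr (hbelow r hr.1 h).2).2
    · rw [habove r hr h]
      have : 1 ≤ exp (C * R) := one_le_exp (by positivity)
      nlinarith [norm_nonneg z]
  rw [intervalIntegrable_iff_integrableOn_Ioc_of_le hR]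
  have hfin : IsFiniteMeasure (volume.restrict (Ioc 0 R)) := ⟨by simp⟩
  refine Integrable.of_bound
    (hc.comp_aemeasurable (aemeasurable_id.prodMk hae)).aestronglyMeasurable
    (C * (1 + (1 + ‖z‖) * exp (C * R))) ?_
  have hne : ∀ᵐ r ∂(volume.restrict (Ioc 0 R)), r ≠ σ :=
    ae_restrict_of_ae (Measure.ae_ne volume σ)
  filter_upwards [ae_restrict_mem measurableSet_Ioc, hne] with r hr hrσ
  refine (hgrowth r ⟨hr.1.le, hr.2⟩ _).trans ?_
  gcongr
  exact hbd r ⟨hr.1.le, hr.2⟩ hrσ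

end flow

/-! ### Mollification of functions with a linear modulus -/

lemma mollifier_constants {V : Type*} [NormedAddCommGroup V] [NormedSpace ℝ V] {ρ : V → ℝ} (hρ : ContDiff ℝ (⊤ : ℕ∞) ρ) (hs : HasCompactSupport ρ) :
    ∃ r P Λ : ℝ, 1 ≤ r ∧ 0 < P ∧ 0 < Λ ∧ (∀ ω, r < ‖ω‖ → ρ ω = 0) ∧
      (∀ ω, r < ‖ω‖ → fderiv ℝ ρ ω = 0) ∧ (∀ ω, |ρ ω| ≤ P) ∧ (∀ ω, ‖fderiv ℝ ρ ω‖ ≤ P) ∧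
      ∀ ω k, |ρ (ω + k) - ρ ω - fderiv ℝ ρ ω k| ≤ Λ * ‖k‖ ^ 2 := by
  have hρ1 : ContDiff ℝ 1 (fderiv ℝ ρ) := hρ.fderiv_right (by norm_cast)
  have hd : Differentiable ℝ ρ := hρ.differentiable (by simp)
  obtain ⟨r, hr⟩ := hs.isCompact.isBounded.subset_closedBall (0 : V)
  obtain ⟨P1, hP1⟩ := hρ.continuous.bounded_above_of_compact_support hs
  obtain ⟨P2, hP2⟩ := hρ1.continuous.bounded_above_of_compact_support (hs.fderiv ℝ)
  obtain ⟨Λ, hΛ⟩ := hρ1.lipschitzWith_of_hasCompactSupport (hs.fderiv ℝ) (by norm_num)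
  have hout : ∀ ω, max r 1 < ‖ω‖ → ω ∉ tsupport ρ := by
    intro ω hω h
    have := hr h
    rw [mem_closedBall_zero_iff] at this
    exact absurd ((le_max_left r 1).trans_lt hω) (not_lt.2 this)
  refine ⟨max r 1, max 1 (max P1 P2), Λ + 1, le_max_right _ _, by positivity, by positivity,
    fun ω hω => image_eq_zero_of_notMem_tsupport (hout ω hω),
    fun ω hω => image_eq_zero_of_notMem_tsupport
      (fun h => hout ω hω (tsupport_fderiv_subset ℝ h)),
    fun ω => (hP1 ω).trans ((le_max_left _ _).trans (le_max_right _ _)),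
    fun ω => (hP2 ω).trans ((le_max_right _ _).trans (le_max_right _ _)), fun ω k => ?_⟩
  have := (convex_segment ω (ω + k)).norm_image_sub_le_of_norm_fderiv_le' (𝕜 := ℝ) (f := ρ)
    (φ := fderiv ℝ ρ ω) (C := Λ * ‖k‖) (fun x _ => hd x) (fun x hx => by
      rw [← dist_eq_norm]
      refine (hΛ.dist_le_mul x ω).trans ?_
      gcongr
      rw [dist_eq_norm]
      have := norm_sub_le_of_mem_segment hx
      simpa using this) (left_mem_segment ℝ _ _) (right_mem_segment ℝ _ _)
  rw [Real.norm_eq_abs, add_sub_cancel_left] at this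
  refine this.trans ?_
  nlinarith [norm_nonneg k]

section mollifier
variable {V W : Type*} [NormedAddCommGroup V] [NormedSpace ℝ V] [FiniteDimensional ℝ V]
  [MeasurableSpace V] [BorelSpace V] [NormedAddCommGroup W] [NormedSpace ℝ W]
  {μ : Measure V} [μ.IsAddHaarMeasure]

lemma integrable_smul_of_ball {ψ : V → ℝ} {g : V → W} {r P G : ℝ} (hψ : Continuous ψ)
    (hψ0 : ∀ ω, r < ‖ω‖ → ψ ω = 0) (hψP : ∀ ω, |ψ ω| ≤ P) (hg : AEStronglyMeasurable g μ)
    (hgG : ∀ ω, ‖ω‖ ≤ r → ‖g ω‖ ≤ G) :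
    Integrable (fun ω => ψ ω • g ω) μ ∧
      ‖∫ ω, ψ ω • g ω ∂μ‖ ≤ P * G * μ.real (Metric.closedBall 0 r) := by
  have hP : 0 ≤ P := (abs_nonneg _).trans (hψP 0)
  have hsupp : ∀ ω, ω ∉ Metric.closedBall (0 : V) r → ψ ω • g ω = 0 := by
    intro ω hω
    rw [mem_closedBall_zero_iff, not_le] at hω
    rw [hψ0 ω hω, zero_smul]
  have hb : ∀ ω ∈ Metric.closedBall (0 : V) r, ‖ψ ω • g ω‖ ≤ P * G := by
    intro ω hω
    rw [norm_smul]
    exact mul_le_mul (hψP ω) (hgG ω (by simpa using hω)) (norm_nonneg _) hP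
  have hfin : μ (Metric.closedBall (0 : V) r) < ⊤ :=
    (isCompact_closedBall (0 : V) r).measure_lt_top
  constructor
  · rw [← integrableOn_iff_integrable_of_support_subset
      (s := Metric.closedBall (0 : V) r) (fun ω hω => by_contra fun h => hω (hsupp ω h))]
    exact Measure.integrableOn_of_bounded hfin.ne
      (hψ.aestronglyMeasurable.smul hg)
      ((ae_restrict_mem Metric.isClosed_closedBall.measurableSet).mono hb)
  · rw [← setIntegral_eq_integral_of_forall_compl_eq_zero (s := Metric.closedBall (0 : V) r)
      hsupp]
    exact norm_setIntegral_le_of_norm_le_const hfin hb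

/-- Integration by parts: the derivative of the mollifier along `v` integrates to zero against
a function that is invariant along `v`. -/
lemma integral_fderiv_smul_eq_zero {ρ : V → ℝ} {g : V → W} {r P G : ℝ} {v : V}
    (hρ : ContDiff ℝ (⊤ : ℕ∞) ρ) (hρ0 : ∀ ω, r < ‖ω‖ → ρ ω = 0)
    (hρ0' : ∀ ω, r < ‖ω‖ → fderiv ℝ ρ ω = 0) (hρP : ∀ ω, |ρ ω| ≤ P)
    (hρP' : ∀ ω, ‖fderiv ℝ ρ ω‖ ≤ P) (hg : AEStronglyMeasurable g μ)
    (hgG : ∀ ω, ‖ω‖ ≤ r → ‖g ω‖ ≤ G) (hgv : ∀ ω, ∀ t : ℝ, g (ω + t • v) = g ω) :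
    ∫ ω, fderiv ℝ ρ ω v • g ω ∂μ = 0 := by
  have hc : Continuous fun ω => fderiv ℝ ρ ω v :=
    (hρ.continuous_fderiv (by simp)).clm_apply continuous_const
  have i1 := (integrable_smul_of_ball (μ := μ) hc (fun ω hω => by simp [hρ0' ω hω])
    (fun ω => ((fderiv ℝ ρ ω).le_opNorm v).trans
      (mul_le_mul_of_nonneg_right (hρP' ω) (norm_nonneg v))) hg hgG).1
  have i2 := (integrable_smul_of_ball (μ := μ) hρ.continuous hρ0 hρP hg hgG).1
  have := integral_bilinear_hasLineDerivAt_right_eq_neg_left_of_integrable (μ := μ)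
    (f := g) (f' := fun _ => (0 : W)) (g := ρ) (g' := fun ω => fderiv ℝ ρ ω v) (v := v)
    (B := (ContinuousLinearMap.lsmul ℝ ℝ).flip) (by simp) i1 i2
    (fun ω _ => by
      change HasDerivAt (fun t : ℝ => g (ω + t • v)) 0 0
      simp_rw [hgv ω]
      exact hasDerivAt_const _ _)
    (fun ω _ => ((hρ.differentiable (by simp)) ω).hasFDerivAt.hasLineDerivAt v)
  simpa using this

/-- Mollification with an invertible linear scale map `S` (with right inverse `S'`) produces a
function with a first order Taylor expansion whose constants depend on `f` only through the modulus
`H`. In particular they are uniform over the time slices of the drift. -/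
lemma mollified_taylor [CompleteSpace W] {ρ : V → ℝ} {S S' : V →L[ℝ] V} (hSS' : ∀ h, S (S' h) = h)
    {r P Λ H : ℝ} (hΛ : 0 < Λ) (hr : 1 ≤ r) (hP : 0 < P) (hH : 0 < H)
    (hρ : ContDiff ℝ (⊤ : ℕ∞) ρ) (hρ0 : ∀ ω, r < ‖ω‖ → ρ ω = 0)
    (hρ0' : ∀ ω, r < ‖ω‖ → fderiv ℝ ρ ω = 0) (hρP : ∀ ω, |ρ ω| ≤ P)
    (hρP' : ∀ ω, ‖fderiv ℝ ρ ω‖ ≤ P)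
    (hρΛ : ∀ ω k, |ρ (ω + k) - ρ ω - fderiv ℝ ρ ω k| ≤ Λ * ‖k‖ ^ 2) :
    ∃ L M : ℝ, 0 ≤ L ∧ 0 ≤ M ∧ ∀ f : V → W, StronglyMeasurable f →
      (∀ x x', ‖f x - f x'‖ ≤ H * (1 + ‖x - x'‖)) → ∀ z, ∃ B : V →L[ℝ] W,
        (∀ h, B h = ∫ ω, fderiv ℝ ρ ω (S' h) • f (z - S ω) ∂μ) ∧ ‖B‖ ≤ L ∧
        ∀ h, ‖h‖ ≤ 1 → ‖∫ ω, ρ ω • f (z + h - S ω) ∂μ - ∫ ω, ρ ω • f (z - S ω) ∂μ - B h‖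
          ≤ M * ‖h‖ ^ 2 := by
  set r' := r + ‖S'‖ with hr'
  have hr'0 : 0 ≤ r' := by positivity
  set Q := H * (1 + ‖S‖ * r') * μ.real (Metric.closedBall 0 r') with hQ
  have hQ0 : 0 ≤ Q := by positivity
  refine ⟨P * ‖S'‖ * Q, Λ * ‖S'‖ ^ 2 * Q, by positivity, by positivity, fun f hf hfH z => ?_⟩
  have hSm : AEStronglyMeasurable (fun ω => f (z - S ω)) μ :=
    (hf.comp_measurable (by fun_prop : Measurable fun ω => z - S ω)).aestronglyMeasurable
  have hSm' : AEStronglyMeasurable (fun ω => f (z - S ω) - f z) μ :=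
    hSm.sub aestronglyMeasurable_const
  have hG' : ∀ ω, ‖ω‖ ≤ r' → ‖f (z - S ω) - f z‖ ≤ H * (1 + ‖S‖ * r') := by
    intro ω hω
    refine (hfH _ _).trans ?_
    rw [sub_sub_cancel_left, norm_neg]
    gcongr
    exact S.le_opNorm_of_le hω
  have hG : ∀ ω, ‖ω‖ ≤ r' → ‖f (z - S ω)‖ ≤ H * (1 + ‖S‖ * r') + ‖f z‖ := by
    intro ω hω
    have := norm_add_le (f (z - S ω) - f z) (f z)
    rw [sub_add_cancel] at this
    linarith [hG' ω hω]
  have hrr' : r ≤ r' := le_add_of_nonneg_right (norm_nonneg _)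
  -- the weight may be integrated against `f (z - S ω) - f z` when it has mean zero
  have key : ∀ (ψ : V → ℝ) (p : ℝ), Continuous ψ → (∀ ω, r' < ‖ω‖ → ψ ω = 0) →
      (∀ ω, |ψ ω| ≤ p) → ∫ ω, ψ ω ∂μ = 0 → ‖∫ ω, ψ ω • f (z - S ω) ∂μ‖ ≤ p * Q := by
    intro ψ p hψ h0 hp hz
    have h1 := (integrable_smul_of_ball (μ := μ) hψ h0 hp hSm' hG').2
    have h2 : Integrable ψ μ := by
      simpa using (integrable_smul_of_ball (μ := μ) (g := fun _ => (1:ℝ)) (G := 1) hψ h0 hp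
        aestronglyMeasurable_const (by simp)).1
    have h3 : ∫ ω, ψ ω • (f (z - S ω) - f z) ∂μ = ∫ ω, ψ ω • f (z - S ω) ∂μ := by
      simp_rw [smul_sub]
      rw [integral_sub (integrable_smul_of_ball hψ h0 hp hSm hG).1 (h2.smul_const _),
        integral_smul_const, hz, zero_smul, sub_zero]
    rw [h3] at h1
    exact h1.trans_eq (by rw [hQ]; ring)
  have hdc : ∀ k, Continuous fun ω => fderiv ℝ ρ ω k := fun k =>
    (hρ.continuous_fderiv (by simp)).clm_apply continuous_const
  have hd0 : ∀ k ω, r' < ‖ω‖ → fderiv ℝ ρ ω k = 0 := fun k ω hω => by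
    simp [hρ0' ω (hrr'.trans_lt hω)]
  have hdP : ∀ k ω, |fderiv ℝ ρ ω k| ≤ P * ‖k‖ := fun k ω =>
    ((fderiv ℝ ρ ω).le_opNorm k).trans (mul_le_mul_of_nonneg_right (hρP' ω) (norm_nonneg k))
  have hdint : ∀ k, Integrable (fun ω => fderiv ℝ ρ ω k • f (z - S ω)) μ := fun k =>
    (integrable_smul_of_ball (hdc k) (hd0 k) (hdP k) hSm hG).1
  have hdz : ∀ k, ∫ ω, fderiv ℝ ρ ω k ∂μ = 0 := fun k => by
    simpa using integral_fderiv_smul_eq_zero (μ := μ) (g := fun _ => (1:ℝ)) (G := 1) (v := k)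
      hρ hρ0 hρ0' hρP hρP' aestronglyMeasurable_const (by simp) (by simp)
  set B₀ : V →ₗ[ℝ] W :=
    { toFun := fun h => ∫ ω, fderiv ℝ ρ ω (S' h) • f (z - S ω) ∂μ
      map_add' := fun h h' => by
        simp_rw [map_add, add_smul]
        exact integral_add (hdint _) (hdint _)
      map_smul' := fun a h => by
        simp_rw [map_smul, smul_assoc, RingHom.id_apply]
        exact integral_smul _ _ } with hB₀
  have hB₀le : ∀ h, ‖B₀ h‖ ≤ P * ‖S'‖ * Q * ‖h‖ := by
    intro h
    refine (key _ (P * ‖S' h‖) (hdc _) (hd0 _) (hdP _) (hdz _)).trans ?_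
    calc P * ‖S' h‖ * Q ≤ P * (‖S'‖ * ‖h‖) * Q := by gcongr; exact S'.le_opNorm h
      _ = _ := by ring
  refine ⟨B₀.mkContinuous _ hB₀le, fun h => rfl,
    B₀.mkContinuous_norm_le (by positivity) hB₀le, fun h hh => ?_⟩
  have hS'h : ‖S' h‖ ≤ ‖S'‖ := by
    simpa using S'.le_opNorm_of_le hh
  have hshift : ∫ ω, ρ ω • f (z + h - S ω) ∂μ = ∫ ω, ρ (ω + S' h) • f (z - S ω) ∂μ := by
    rw [← integral_add_right_eq_self _ (S' h)]
    refine integral_congr_ae (Filter.Eventually.of_forall fun ω => ?_)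
    simp only [map_add, hSS']
    congr 2
    abel
  have hs0 : ∀ ω, r' < ‖ω‖ → ρ (ω + S' h) = 0 := by
    intro ω hω
    refine hρ0 _ ?_
    have := norm_sub_le_norm_add ω (S' h)
    linarith
  have hsc : Continuous fun ω => ρ (ω + S' h) :=
    hρ.continuous.comp (continuous_id.add continuous_const)
  have i1 := (integrable_smul_of_ball (μ := μ) hsc hs0 (fun ω => hρP _) hSm hG).1
  have i2 := (integrable_smul_of_ball (μ := μ) hρ.continuous
    (fun ω hω => hρ0 ω (hrr'.trans_lt hω)) hρP hSm hG).1
  have j1 : Integrable (fun ω => ρ (ω + S' h)) μ := by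
    simpa using (integrable_smul_of_ball (μ := μ) (g := fun _ => (1:ℝ)) (G := 1) hsc hs0
      (fun ω => hρP _) aestronglyMeasurable_const (by simp)).1
  have j2 : Integrable ρ μ := by
    simpa using (integrable_smul_of_ball (μ := μ) (g := fun _ => (1:ℝ)) (G := 1) hρ.continuous
      hρ0 hρP aestronglyMeasurable_const (by simp)).1
  have j3 : Integrable (fun ω => fderiv ℝ ρ ω (S' h)) μ := by
    simpa using (integrable_smul_of_ball (μ := μ) (g := fun _ => (1:ℝ)) (G := 1) (hdc (S' h))
      (hd0 _) (hdP _) aestronglyMeasurable_const (by simp)).1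
  have e1 : ∫ ω, ρ ω • f (z + h - S ω) ∂μ - ∫ ω, ρ ω • f (z - S ω) ∂μ
      - B₀.mkContinuous _ hB₀le h
      = ∫ ω, (ρ (ω + S' h) - ρ ω - fderiv ℝ ρ ω (S' h)) • f (z - S ω) ∂μ := by
    have i12 : Integrable (fun ω => ρ (ω + S' h) • f (z - S ω) - ρ ω • f (z - S ω)) μ := i1.sub i2
    simp_rw [sub_smul]
    rw [hshift, integral_sub i12 (hdint _), integral_sub i1 i2]
    rfl
  rw [e1]
  have j12 : Integrable (fun ω => ρ (ω + S' h) - ρ ω) μ := j1.sub j2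
  refine (key (fun ω => ρ (ω + S' h) - ρ ω - fderiv ℝ ρ ω (S' h)) (Λ * ‖S' h‖ ^ 2) ((hsc.sub hρ.continuous).sub (hdc _)) (fun ω hω => ?_)
    (fun ω => hρΛ ω _) ?_).trans ?_
  · simp only [hs0 ω hω, hρ0 ω (hrr'.trans_lt hω), hd0 _ ω hω, sub_zero]
  · rw [integral_sub j12 j3, integral_sub j1 j2, hdz,
      integral_add_right_eq_self (μ := μ) ρ]
    simp
  · calc Λ * ‖S' h‖ ^ 2 * Q ≤ Λ * (‖S'‖ * ‖h‖) ^ 2 * Q := by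
          gcongr; exact S'.le_opNorm h
      _ = _ := by ring

end mollifier

/-! ### The mollified chain -/

section chain
variable {n : ℕ} {d : Fin n → ℕ}

/-- The blocks are changed one at a time. -/
lemma modulus_of_blocks {W : Type*} [NormedAddCommGroup W] {f : E n d → W} {C : ℝ} (hC : 0 ≤ C)
    (hf : ∀ (j : Fin n) (x x' : E n d), (∀ k, k ≠ j → x k = x' k) →
      ‖f x - f x'‖ ≤ C * (1 + ‖x j - x' j‖)) (x x' : E n d) :
    ‖f x - f x'‖ ≤ n * C * (1 + ‖x - x'‖) := by
  have key : ∀ s : Finset (Fin n),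
      ‖f (s.piecewise x x') - f x'‖ ≤ s.card * (C * (1 + ‖x - x'‖)) := by
    intro s
    induction s using Finset.induction_on with
    | empty => simp
    | insert j s hj ih =>
      have h1 := hf j ((insert j s).piecewise x x') (s.piecewise x x') (fun k hk => by
        simp [Finset.piecewise, hk])
      have h2 : ‖(insert j s).piecewise x x' j - s.piecewise x x' j‖ ≤ ‖x - x'‖ := by
        simpa [Finset.piecewise, hj] using norm_le_pi_norm (x - x') j
      have h3 : C * (1 + ‖(insert j s).piecewise x x' j - s.piecewise x x' j‖)
          ≤ C * (1 + ‖x - x'‖) := by gcongr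
      rw [Finset.card_insert_of_notMem hj]
      push_cast
      linarith [norm_sub_le_norm_sub_add_norm_sub (f ((insert j s).piecewise x x'))
        (f (s.piecewise x x')) (f x')]
  have := key Finset.univ
  rw [Finset.piecewise_univ, Finset.card_univ, Fintype.card_fin] at this
  linarith

lemma rpow_le_one_add {x b : ℝ} (hx : 0 ≤ x) (hb : 0 ≤ b) (hb1 : b ≤ 1) : x ^ b ≤ 1 + x := by
  rcases le_total x 1 with h | h
  · linarith [rpow_le_one hx h hb]
  · have := rpow_le_rpow_of_exponent_le h hb1
    rw [rpow_one] at this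
    linarith

lemma ChainHyp.beta_pos [NeZero n] {α T K : ℝ} {A : ℝ → E n d →L[ℝ] E n d}
    {F : ℝ → E n d → E n d} {β : Fin n → ℝ} (hc : ChainHyp n d α T K A F β) (j : Fin n) :
    0 < β j ∧ β j ≤ 1 := by
  rcases Nat.eq_zero_or_pos (j : ℕ) with h | h
  · have : j = 0 := Fin.ext (by simpa using h)
    rw [this]
    exact hc.hβ0
  · refine ⟨lt_trans ?_ (hc.hβ j h).1, (hc.hβ j h).2⟩
    have h1 : (1:ℝ) ≤ ((j : ℕ) : ℝ) := by exact_mod_cast h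
    have h2 := hc.hα₁
    have : 0 ≤ α * (((j : ℕ) : ℝ) - 1) := mul_nonneg (by linarith) (by linarith)
    have : 0 ≤ α * ((j : ℕ) : ℝ) := mul_nonneg (by linarith) (by linarith)
    positivity

/-- The Hölder assumptions in the form used below: a joint modulus `H (1 + ‖x - x'‖)` for every
component, and the exponent `β i` for the `i`-th component in its own block. -/
lemma ChainHyp.modulus [NeZero n] {α T K : ℝ} {A : ℝ → E n d →L[ℝ] E n d}
    {F : ℝ → E n d → E n d} {β : Fin n → ℝ} (hc : ChainHyp n d α T K A F β) :
    ∃ H CH : ℝ, 0 < H ∧ 0 < CH ∧ ∀ (i : Fin n) (t : ℝ) (x x' : E n d),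
      ‖F t x i - F t x' i‖ ≤ H * (1 + ‖x - x'‖) ∧
      ((∀ k, k ≠ i → x k = x' k) → ‖F t x i - F t x' i‖ ≤ CH * ‖x i - x' i‖ ^ β i) := by
  obtain ⟨CH, hCH, h0, h1⟩ := hc.hHolder
  have hn : (0:ℝ) < n := by exact_mod_cast Nat.pos_of_ne_zero (NeZero.ne n)
  refine ⟨n * CH, CH, by positivity, hCH, fun i t x x' => ⟨?_, fun hx => ?_⟩⟩
  · refine modulus_of_blocks (f := fun x => F t x i) hCH.le (fun j y y' hy => ?_) x x'
    rcases Nat.eq_zero_or_pos (i : ℕ) with h | h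
    · have hi : i = 0 := Fin.ext (by simpa using h)
      subst hi
      refine (h0 j t y y' hy).trans ?_
      gcongr
      exact rpow_le_one_add (norm_nonneg _) hc.hβ0.1.le hc.hβ0.2
    · rcases le_or_gt i j with hij | hij
      · refine (h1 i j h hij t y y' hy).trans ?_
        gcongr
        exact rpow_le_one_add (norm_nonneg _) (hc.beta_pos j).1.le (hc.beta_pos j).2
      · simp only [hc.hFdep i t y y' fun k hk => hy k (hij.trans_le hk).ne', sub_self, norm_zero]
        positivity
  · rcases Nat.eq_zero_or_pos (i : ℕ) with h | h
    · have hi : i = 0 := Fin.ext (by simpa using h)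
      subst hi
      exact h0 0 t x x' hx
    · exact h1 i i h le_rfl t _ _ hx

/-- The anisotropic dilation multiplying the `j`-th block by `δ j`. -/
def dilation (δ : Fin n → ℝ) : E n d →L[ℝ] E n d :=
  ContinuousLinearMap.pi fun j => δ j • ContinuousLinearMap.proj j

lemma dilation_apply (δ : Fin n → ℝ) (ω : E n d) (j : Fin n) :
    dilation δ ω j = δ j • ω j := rfl

lemma dilation_single (δ : Fin n → ℝ) (i : Fin n) (v : Fin (d i) → ℝ) :
    dilation δ (Pi.single i v : E n d) = δ i • (Pi.single i v : E n d) := by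
  ext1 j
  rcases eq_or_ne j i with rfl | h
  · simp [dilation_apply]
  · simp [dilation_apply, h]

/-- Taylor expansion of one component of the mollified drift. The bound on the diagonal block uses
the Hölder continuity of `f` in the `i`-th block only, and depends on the scales only through
`δ i`. -/
lemma mollified_block {ρ : E n d → ℝ} {δ : Fin n → ℝ} (hδ : ∀ j, 0 < δ j) (i : Fin n)
    {r P Λ H CH β : ℝ} (hΛ : 0 < Λ) (hr : 1 ≤ r) (hP : 0 < P) (hH : 0 < H) (hCH : 0 < CH)
    (hβ : 0 ≤ β) (hβ1 : β ≤ 1)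
    (hρ : ContDiff ℝ (⊤ : ℕ∞) ρ) (hρ0 : ∀ ω, r < ‖ω‖ → ρ ω = 0)
    (hρ0' : ∀ ω, r < ‖ω‖ → fderiv ℝ ρ ω = 0) (hρP : ∀ ω, |ρ ω| ≤ P)
    (hρP' : ∀ ω, ‖fderiv ℝ ρ ω‖ ≤ P)
    (hρΛ : ∀ ω k, |ρ (ω + k) - ρ ω - fderiv ℝ ρ ω k| ≤ Λ * ‖k‖ ^ 2) :
    ∃ L M : ℝ, 0 ≤ L ∧ 0 ≤ M ∧ ∀ f : E n d → (Fin (d i) → ℝ), Measurable f →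
      (∀ x x', ‖f x - f x'‖ ≤ H * (1 + ‖x - x'‖)) →
      (∀ x x', (∀ k, k ≠ i → x k = x' k) → ‖f x - f x'‖ ≤ CH * ‖x i - x' i‖ ^ β) →
      ∀ z, ∃ B : E n d →L[ℝ] (Fin (d i) → ℝ), ‖B‖ ≤ L ∧
        (∀ v, ‖v‖ ≤ 1 → ‖B (Pi.single i v)‖ ≤
          CH * (P * r * volume.real (Metric.closedBall (0 : E n d) r)) * δ i ^ (β - 1)) ∧
        ∀ h, ‖h‖ ≤ 1 → ‖(∫ ω, ρ ω • f (fun j => (z + h) j - δ j • ω j))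
          - (∫ ω, ρ ω • f (fun j => z j - δ j • ω j)) - B h‖ ≤ M * ‖h‖ ^ 2 := by
  have hSS' : ∀ h : E n d, dilation δ (dilation (fun j => (δ j)⁻¹) h) = h := by
    intro h
    ext1 j
    simp only [dilation_apply]
    rw [smul_inv_smul₀ (hδ j).ne']
  obtain ⟨L, M, hL, hM, hB⟩ := mollified_taylor (W := Fin (d i) → ℝ) (μ := volume) hSS' hΛ hr hP
    hH hρ hρ0 hρ0' hρP hρP' hρΛ
  refine ⟨L, M, hL, hM, fun f hf hfH hfβ z => ?_⟩
  obtain ⟨B, hB1, hB2, hB3⟩ := hB f hf.stronglyMeasurable hfH z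
  refine ⟨B, hB2, fun v hv => ?_, hB3⟩
  set S := dilation (d := d) δ with hS
  set e := (Pi.single i v : E n d) with he
  have hS'e : dilation (fun j => (δ j)⁻¹) e = (δ i)⁻¹ • e := dilation_single _ i v
  have hδi := hδ i
  -- freezing the `i`-th mollification variable gives a function invariant along `e`
  set g : E n d → (Fin (d i) → ℝ) := fun ω => f (z - S (Function.update ω i 0)) with hg
  have hgv : ∀ ω, ∀ t : ℝ, g (ω + t • (δ i)⁻¹ • e) = g ω := by
    intro ω t
    have : Function.update (ω + t • (δ i)⁻¹ • e) i 0 = Function.update ω i 0 := by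
      ext1 j
      rcases eq_or_ne j i with rfl | h
      · simp
      · simp [he, h]
    simp only [hg, this]
  have hfm : AEStronglyMeasurable (fun ω => f (z - S ω)) volume :=
    (hf.comp (by fun_prop : Measurable fun ω => z - S ω)).aestronglyMeasurable
  have hupd : Measurable fun ω : E n d => Function.update ω i 0 := by
    refine measurable_pi_lambda _ fun j => ?_
    rcases eq_or_ne j i with rfl | h
    · simp
    · simpa [h] using measurable_pi_apply j
  have hgm : AEStronglyMeasurable g volume :=
    (hf.comp ((by fun_prop : Measurable fun ω => z - S ω).comp hupd)).aestronglyMeasurable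
  have hup : ∀ ω : E n d, ‖Function.update ω i 0‖ ≤ ‖ω‖ := by
    intro ω
    refine (pi_norm_le_iff_of_nonneg (norm_nonneg _)).2 fun j => ?_
    rcases eq_or_ne j i with rfl | h
    · simp
    · simpa [h] using norm_le_pi_norm ω j
  have hfz : ∀ ω : E n d, ‖ω‖ ≤ r → ‖f (z - S ω)‖ ≤ H * (1 + ‖S‖ * r) + ‖f z‖ := by
    intro ω hω
    have h1 := hfH (z - S ω) z
    rw [sub_sub_cancel_left, norm_neg] at h1
    have h2 : H * (1 + ‖S ω‖) ≤ H * (1 + ‖S‖ * r) := by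
      gcongr; exact S.le_opNorm_of_le hω
    linarith [norm_sub_norm_le (f (z - S ω)) (f z)]
  have hgb : ∀ ω : E n d, ‖ω‖ ≤ r → ‖g ω‖ ≤ H * (1 + ‖S‖ * r) + ‖f z‖ := fun ω hω =>
    hfz _ ((hup ω).trans hω)
  have hdiff : ∀ ω : E n d, ‖ω‖ ≤ r → ‖f (z - S ω) - g ω‖ ≤ CH * (δ i * r) ^ β := by
    intro ω hω
    refine (hfβ _ _ fun k hk => ?_).trans ?_
    · simp [hS, dilation_apply, hk]
    · gcongr
      simp only [hS, Pi.sub_apply, dilation_apply, Function.update_self, smul_zero, sub_zero,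
        sub_sub_cancel_left, norm_neg, norm_smul, Real.norm_of_nonneg hδi.le]
      gcongr
      exact (norm_le_pi_norm ω i).trans hω
  have hψc : Continuous fun ω => fderiv ℝ ρ ω ((δ i)⁻¹ • e) :=
    (hρ.continuous_fderiv (by simp)).clm_apply continuous_const
  have hψ0 : ∀ ω, r < ‖ω‖ → fderiv ℝ ρ ω ((δ i)⁻¹ • e) = 0 := fun ω hω => by simp [hρ0' ω hω]
  have hψP : ∀ ω, |fderiv ℝ ρ ω ((δ i)⁻¹ • e)| ≤ P * (δ i)⁻¹ := by
    intro ω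
    refine ((fderiv ℝ ρ ω).le_opNorm _).trans ?_
    rw [norm_smul, Real.norm_of_nonneg (inv_nonneg.2 hδi.le), he, Pi.norm_single]
    calc ‖fderiv ℝ ρ ω‖ * ((δ i)⁻¹ * ‖v‖) ≤ P * ((δ i)⁻¹ * 1) := by
          gcongr
          exact hρP' ω
      _ = _ := by rw [mul_one]
  have hzero := integral_fderiv_smul_eq_zero (μ := volume) hρ hρ0 hρ0' hρP hρP' hgm hgb hgv
  have i1 := (integrable_smul_of_ball (μ := volume) hψc hψ0 hψP hfm hfz).1
  have i2 := (integrable_smul_of_ball (μ := volume) hψc hψ0 hψP hgm hgb).1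
  have hmain := (integrable_smul_of_ball (μ := volume) hψc hψ0 hψP (hfm.sub hgm) hdiff).2
  have hBe : B e = ∫ ω, fderiv ℝ ρ ω ((δ i)⁻¹ • e) • (f (z - S ω) - g ω) := by
    simp_rw [smul_sub]
    rw [integral_sub i1 i2, hzero, sub_zero, hB1, hS'e]
  rw [hBe]
  refine hmain.trans ?_
  have hrβ : r ^ β ≤ r := by
    simpa using rpow_le_rpow_of_exponent_le hr hβ1
  rw [mul_rpow hδi.le (by linarith), rpow_sub hδi, rpow_one]
  calc P * (δ i)⁻¹ * (CH * (δ i ^ β * r ^ β)) * volume.real (Metric.closedBall (0 : E n d) r)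
      ≤ P * (δ i)⁻¹ * (CH * (δ i ^ β * r)) * volume.real (Metric.closedBall (0 : E n d) r) := by
        gcongr
    _ = _ := by field_simp

/-- The trace only involves the diagonal blocks. -/
lemma abs_trace_le {B : E n d →L[ℝ] E n d} {τ : Fin n → ℝ}
    (hB : ∀ i v, ‖v‖ ≤ 1 → ‖B (Pi.single i v) i‖ ≤ τ i) :
    |LinearMap.trace ℝ (E n d) B.toLinearMap| ≤ ∑ i, d i * τ i := by
  rw [LinearMap.trace_eq_matrix_trace ℝ (Pi.basis fun i : Fin n => Pi.basisFun ℝ (Fin (d i))),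
    Matrix.trace, Fintype.sum_sigma]
  refine (Finset.abs_sum_le_sum_abs _ _).trans (Finset.sum_le_sum fun i _ => ?_)
  refine (Finset.abs_sum_le_sum_abs _ _).trans ?_
  refine (Finset.sum_le_card_nsmul _ _ (τ i) fun k _ => ?_).trans (by simp)
  rw [Matrix.diag_apply, LinearMap.toMatrix_apply, Pi.basis_apply, Pi.basis_repr]
  refine le_trans ?_ (hB i (Pi.single k 1) (by simp [Pi.norm_single]))
  simpa using norm_le_pi_norm (B (Pi.single i (Pi.single k 1)) i) k

/-- The spatial derivative of the reversed field `-(A + F^δ)`. The constants `CA`, `Q` in the trace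
bound do not depend on the scales, while `L`, `M`, `D` may. -/
lemma exists_linearization [NeZero n] {α T K : ℝ} {A : ℝ → E n d →L[ℝ] E n d}
    {F : ℝ → E n d → E n d} {β : Fin n → ℝ} (hc : ChainHyp n d α T K A F β)
    {ρ : Fin n → E n d → ℝ} (hρ : IsMollifier ρ) :
    ∃ CA Q : ℝ, 0 ≤ CA ∧ 0 ≤ Q ∧ ∀ δ : Fin n → Fin n → ℝ, (∀ i j, 0 < δ i j) →
      ∃ L M D : ℝ, 0 ≤ L ∧ 0 ≤ M ∧ 0 ≤ D ∧
        (∀ u, ‖-(A u 0 + molF ρ δ F u 0)‖ ≤ D) ∧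
        ∀ u x, ∃ B : E n d →L[ℝ] E n d, ‖B‖ ≤ L ∧
          |LinearMap.trace ℝ (E n d) B.toLinearMap|
            ≤ ∑ i, d i * (CA + Q * δ i i ^ (β i - 1)) ∧
          ∀ h, ‖h‖ ≤ 1 → ‖-(A u (x + h) + molF ρ δ F u (x + h))
            - -(A u x + molF ρ δ F u x) - B h‖ ≤ M * ‖h‖ ^ 2 := by
  obtain ⟨CA, hCA⟩ := hc.hAbdd
  have hCA0 : 0 ≤ CA := (norm_nonneg _).trans (hCA 0)
  obtain ⟨H, CH, hH, hCH, hF⟩ := hc.modulus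
  choose r P Λ hr hP hΛ hρ0 hρ0' hρP hρP' hρΛ using
    fun i => mollifier_constants (hρ i).1 (hρ i).2.1
  set q : Fin n → ℝ := fun i =>
    CH * (P i * r i * volume.real (Metric.closedBall (0 : E n d) (r i))) with hq
  have hq0 : ∀ i, 0 ≤ q i := fun i => by
    have := hP i
    have := hr i
    positivity
  have hFm : ∀ u i, Measurable fun x => F u x i := fun u i =>
    (measurable_pi_apply i).comp (hc.hFmeas.comp measurable_prodMk_left)
  refine ⟨CA, ∑ i, q i, hCA0, Finset.sum_nonneg fun i _ => hq0 i, fun δ hδ => ?_⟩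
  choose L M hL hM hB using fun i => mollified_block (hδ i) i (hΛ i) (hr i) (hP i) hH hCH
    (hc.beta_pos i).1.le (hc.beta_pos i).2 (hρ i).1 (hρ0 i) (hρ0' i) (hρP i) (hρP' i) (hρΛ i)
  have hLs : 0 ≤ ∑ i, L i := Finset.sum_nonneg fun i _ => hL i
  have hMs : 0 ≤ ∑ i, M i := Finset.sum_nonneg fun i _ => hM i
  set D : Fin n → ℝ := fun i => P i * (K + H * (1 + ‖dilation (d := d) (δ i)‖ * r i)) *
    volume.real (Metric.closedBall (0 : E n d) (r i)) with hD
  have hD0 : ∀ i, 0 ≤ D i := fun i => by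
    have := hP i
    have := hr i
    have := hc.hK
    positivity
  refine ⟨CA + ∑ i, L i, ∑ i, M i, ∑ i, D i, by positivity, hMs,
    Finset.sum_nonneg fun i _ => hD0 i, fun u => ?_, fun u x => ?_⟩
  · rw [map_zero, zero_add, norm_neg]
    refine (pi_norm_le_iff_of_nonneg (Finset.sum_nonneg fun i _ => hD0 i)).2 fun i => ?_
    refine le_trans ?_ (Finset.single_le_sum (fun i _ => hD0 i) (Finset.mem_univ i))
    have hm : Measurable fun ω : E n d => F u (0 - dilation (δ i) ω) i :=
      (hFm u i).comp (by fun_prop)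
    refine (integrable_smul_of_ball (μ := volume) (hρ i).1.continuous (hρ0 i) (hρP i)
      hm.aestronglyMeasurable fun ω hω => ?_).2
    have h1 := (hF i u (0 - dilation (δ i) ω) 0).1
    rw [sub_zero, zero_sub, norm_neg] at h1
    have h2 : H * (1 + ‖dilation (δ i) ω‖) ≤ H * (1 + ‖dilation (d := d) (δ i)‖ * r i) := by
      gcongr; exact ContinuousLinearMap.le_opNorm_of_le _ hω
    rw [zero_sub]
    linarith [norm_sub_norm_le (F u (-dilation (δ i) ω) i) (F u 0 i), hc.hF0 u i]
  · choose B hB1 hB2 hB3 using fun i => hB i (fun x => F u x i) (hFm u i)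
      (fun y y' => (hF i u y y').1) (fun y y' => (hF i u y y').2) x
    have hpi : ‖ContinuousLinearMap.pi B‖ ≤ ∑ i, L i := by
      refine ContinuousLinearMap.opNorm_le_bound _ hLs fun h => ?_
      refine (pi_norm_le_iff_of_nonneg (by positivity)).2 fun i => ?_
      refine ((B i).le_opNorm h).trans ?_
      gcongr
      exact (hB1 i).trans (Finset.single_le_sum (fun i _ => hL i) (Finset.mem_univ i))
    refine ⟨-(A u + ContinuousLinearMap.pi B), ?_, ?_, fun h hh => ?_⟩
    · rw [norm_neg]
      exact (norm_add_le _ _).trans (add_le_add (hCA u) hpi)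
    · refine abs_trace_le fun i v hv => ?_
      have h1 : ‖A u (Pi.single i v) i‖ ≤ CA := by
        refine (norm_le_pi_norm (A u (Pi.single i v)) i).trans ?_
        refine ((A u).le_of_opNorm_le (hCA u) _).trans ?_
        rw [Pi.norm_single]
        nlinarith
      have h2 : ‖B i (Pi.single i v)‖ ≤ (∑ i, q i) * δ i i ^ (β i - 1) := by
        refine (hB2 i v hv).trans ?_
        have := hδ i i
        gcongr
        exact Finset.single_le_sum (f := q) (fun i _ => hq0 i) (Finset.mem_univ i)
      simp only [_root_.neg_apply, _root_.add_apply, Pi.neg_apply,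
        Pi.add_apply, ContinuousLinearMap.coe_pi', norm_neg]
      exact (norm_add_le _ _).trans (add_le_add h1 h2)
    · have : -(A u (x + h) + molF ρ δ F u (x + h)) - -(A u x + molF ρ δ F u x)
          - (-(A u + ContinuousLinearMap.pi B)) h
          = -(molF ρ δ F u (x + h) - molF ρ δ F u x - ContinuousLinearMap.pi B h) := by
        simp only [_root_.neg_apply, _root_.add_apply, map_add]
        abel
      rw [this, norm_neg]
      refine (pi_norm_le_iff_of_nonneg (by positivity)).2 fun i => (hB3 i h hh).trans ?_
      gcongr
      exact Finset.single_le_sum (fun i _ => hM i) (Finset.mem_univ i)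

lemma measurable_field [NeZero n] {α T K : ℝ} {A : ℝ → E n d →L[ℝ] E n d}
    {F : ℝ → E n d → E n d} {β : Fin n → ℝ} (hc : ChainHyp n d α T K A F β)
    {ρ : Fin n → E n d → ℝ} (hρ : IsMollifier ρ) (δ : Fin n → Fin n → ℝ) :
    Measurable fun p : ℝ × E n d => A p.1 p.2 + molF ρ δ F p.1 p.2 := by
  have h1 : Measurable fun p : ℝ × E n d => A p.1 p.2 := by
    have := measurable_uncurry_of_continuous_of_measurable (u := fun (x : E n d) (t : ℝ) => A t x)
      (fun t => (A t).continuous) hc.hAmeas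
    exact this.comp measurable_swap
  refine h1.add (measurable_pi_lambda _ fun i => ?_)
  have h2 : Measurable fun q : (ℝ × E n d) × E n d =>
      ρ i q.2 • F q.1.1 (fun j => q.1.2 j - δ i j • q.2 j) i := by
    have h3 : Measurable fun q : (ℝ × E n d) × E n d =>
        (q.1.1, (fun j => q.1.2 j - δ i j • q.2 j : E n d)) := by
      refine (measurable_fst.comp measurable_fst).prodMk (measurable_pi_lambda _ fun j => ?_)
      exact ((measurable_pi_apply j).comp (measurable_snd.comp measurable_fst)).sub
        (((measurable_pi_apply j).comp measurable_snd).fun_const_smul (δ i j))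
    exact ((hρ i).1.continuous.measurable.comp measurable_snd).smul
      ((measurable_pi_apply i).comp (hc.hFmeas.comp h3))
  exact h2.stronglyMeasurable.integral_prod_right'.measurable

/-- The exponent of `s - t` in `(s - t) δ_{jj}^{β_j - 1}` is nonnegative. This is where the lower
bound on `β_j` enters: the exponent equals
`(β_j (1 + α j) - (1 + α (j - 1))) / (α β_j)`. -/
lemma ChainHyp.exponent_nonneg [NeZero n] {α T K : ℝ} {A : ℝ → E n d →L[ℝ] E n d}
    {F : ℝ → E n d → E n d} {β : Fin n → ℝ} (hc : ChainHyp n d α T K A F β) (j : Fin n)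
    (hj : 1 ≤ (j : ℕ)) :
    0 ≤ (1 + α * (((j : ℕ) : ℝ) - 1)) / (α * β j) * (β j - 1) + 1 := by
  have h1 := (hc.hβ j hj).1
  have hb := (hc.beta_pos j).1
  have hα : 0 < α := by linarith [hc.hα₁]
  have hα' : 0 < 1 + α * ((j : ℕ) : ℝ) := by positivity
  rw [div_lt_iff₀ hα'] at h1
  have : (1 + α * (((j : ℕ) : ℝ) - 1)) / (α * β j) * (β j - 1) + 1
      = (β j * (1 + α * ((j : ℕ) : ℝ)) - (1 + α * (((j : ℕ) : ℝ) - 1))) / (α * β j) := by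
    field_simp
    ring
  rw [this]
  exact div_nonneg (by linarith) (by positivity)

/-- Lower bound for the Jacobian of the backward flow, for arbitrary positive scales. -/
lemma det_lower_bound_of_scales [NeZero n] {α T K : ℝ} {A : ℝ → E n d →L[ℝ] E n d}
    {F : ℝ → E n d → E n d} {β : Fin n → ℝ} (hc : ChainHyp n d α T K A F β)
    {ρ : Fin n → E n d → ℝ} (hρ : IsMollifier ρ) :
    ∃ CA Q : ℝ, 0 ≤ CA ∧ 0 ≤ Q ∧ ∀ δ : Fin n → Fin n → ℝ, (∀ i j, 0 < δ i j) →
      ∀ t s : ℝ, 0 ≤ t → t ≤ s → ∀ θ : ℝ → E n d → E n d,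
        (∀ t' : ℝ, 0 ≤ t' → t' ≤ s → ∀ z : E n d,
          θ t' z = z - ∫ u in t'..s, (A u (θ u z) + molF ρ δ F u (θ u z))) →
        ∀ (y : E n d) (J : E n d →L[ℝ] E n d), HasFDerivAt (θ t) J y →
          exp (-((∑ i, d i * (CA + Q * δ i i ^ (β i - 1))) + 1) * (s - t))
            ≤ LinearMap.det J.toLinearMap := by
  obtain ⟨CA, Q, hCA, hQ, h⟩ := exists_linearization hc hρ
  refine ⟨CA, Q, hCA, hQ, fun δ hδ t s ht hts θ hθ y J hJ => ?_⟩
  obtain ⟨L, M, D, hL, hM, hD, hG0, hG⟩ := h δ hδ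
  -- time is reversed, so that the terminal condition becomes an initial condition
  set c : ℝ → E n d → E n d := fun r x => -(A (s - r) x + molF ρ δ F (s - r) x) with hcdef
  set X : ℝ → E n d → E n d := fun r z => θ (s - r) z with hXdef
  have hR : 0 ≤ s - t := by linarith
  have hLip : ∀ u x y, ‖c u x - c u y‖ ≤ L * ‖x - y‖ := fun u =>
    lipschitz_of_taylor (M := M) fun x => by
      obtain ⟨B, hB1, -, hB3⟩ := hG (s - u) x
      exact ⟨B, hB1, hB3⟩
  have hX : ∀ r ∈ Icc 0 (s - t), ∀ z, X r z = z + ∫ u in (0:ℝ)..r, c u (X u z) := by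
    intro r hr z
    have := intervalIntegral.integral_comp_sub_left (a := 0) (b := r)
      (fun u => A u (θ u z) + molF ρ δ F u (θ u z)) s
    simp only [hcdef, hXdef]
    rw [intervalIntegral.integral_neg, this, sub_zero,
      hθ (s - r) (by linarith [hr.2]) (by linarith [hr.1]) z, sub_eq_add_neg]
  have hgrowth : ∀ u ∈ Icc 0 (s - t), ∀ x, ‖c u x‖ ≤ (D + L) * (1 + ‖x‖) := by
    intro u _ x
    have h1 := hLip u x 0
    rw [sub_zero] at h1
    have h2 : ‖c u 0‖ ≤ D := hG0 (s - u)
    nlinarith [norm_sub_norm_le (c u x) (c u 0), norm_nonneg x]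
  have hcm : Measurable fun p : ℝ × E n d => c p.1 p.2 :=
    ((measurable_field hc hρ δ).comp
      ((measurable_const.sub measurable_fst).prodMk measurable_snd)).neg
  have hint : ∀ z, IntervalIntegrable (fun u => c u (X u z)) volume 0 (s - t) := fun z =>
    flow_intervalIntegrable hR (add_nonneg hD hL) hcm hgrowth (x := fun r => X r z)
      fun r hr => hX r hr z
  refine det_flow_lower_bound (y := y) (Pi.basis fun i : Fin n => Pi.basisFun ℝ (Fin (d i))) hR hL hM ?_
    hLip (fun u x => hG (s - u) x) hint hX ?_
  · exact Finset.sum_nonneg fun i _ => by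
      have := hδ i i
      positivity
  · simpa [hXdef] using hJ

end chain

/-- Lemma `LEMMA_FOR_DET`, control of the Jacobian determinant.  With the
mollification scales `δ_{1j} = C₁` and `δ_{ij} = C̄ (s−t)^{(1+α(j−2))/(αβ^j)}` for
`2 ≤ i ≤ j ≤ n` (0-indexed below), `C̄, C₁` large enough, there is `c₀ = c₀(T) > 0`,
independent of `t, s, y` and of `δ`, such that the Jacobian `J^δ_{t,s}(y)` of the backward
flow `y ↦ θ^δ_{t,s}(y)` of the mollified system satisfies `det J^δ_{t,s}(y) ≥ c₀`. -/
theorem stmt8 {n : ℕ} [NeZero n] {d : Fin n → ℕ} {α T K : ℝ}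
    {A : ℝ → E n d →L[ℝ] E n d} {F : ℝ → E n d → E n d} {β : Fin n → ℝ}
    (hc : ChainHyp n d α T K A F β)
    (ρ : Fin n → E n d → ℝ) (hρ : IsMollifier ρ) :
    ∃ Cbar₀ C₁₀ : ℝ, ∀ Cbar C₁ : ℝ, Cbar₀ ≤ Cbar → C₁₀ ≤ C₁ →
      ∃ c₀ : ℝ, 0 < c₀ ∧
        ∀ t s : ℝ, 0 ≤ t → t < s → s ≤ T →
        ∀ δ : Fin n → Fin n → ℝ,
          (δ = fun (i j : Fin n) => if (i : ℕ) = 0 then C₁ else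
            Cbar * (s - t) ^ ((1 + α * (((j : ℕ) : ℝ) - 1)) / (α * β j))) →
        ∀ (θδ : ℝ → E n d → E n d) (J : E n d → E n d →L[ℝ] E n d),
          (∀ t' : ℝ, 0 ≤ t' → t' ≤ s → ∀ z : E n d,
            θδ t' z = z - ∫ u in t'..s, (A u (θδ u z) + molF ρ δ F u (θδ u z))) →
          (∀ y : E n d, HasFDerivAt (θδ t) (J y) y) →
          ∀ y : E n d, c₀ ≤ LinearMap.det (J y).toLinearMap := by
  obtain ⟨CA, Q, hCA, hQ, hdet⟩ := det_lower_bound_of_scales hc hρ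
  -- `κ i` bounds `(s - t) * δ_{ii}^{β_i - 1}`
  set κ : Fin n → ℝ := fun i => if (i : ℕ) = 0 then T else
    T ^ ((1 + α * (((i : ℕ) : ℝ) - 1)) / (α * β i) * (β i - 1) + 1) with hκ
  refine ⟨1, 1, fun Cbar C₁ hCb hC₁ =>
    ⟨exp (-((∑ i, d i * (CA * T + Q * κ i)) + T)), exp_pos _, ?_⟩⟩
  intro t s ht hts hsT δ hδ θδ J hθ hJ y
  have hR : 0 < s - t := sub_pos.2 hts
  have hRT : s - t ≤ T := by linarith
  have hδ0 : ∀ i j, 0 < δ i j := by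
    intro i j
    rw [hδ]
    dsimp only
    split_ifs
    · linarith
    · have : 0 < Cbar := by linarith
      positivity
  refine le_trans (exp_le_exp.2 ?_) (hdet δ hδ0 t s ht hts.le θδ hθ y (J y) (hJ y))
  rw [neg_mul, neg_le_neg_iff, add_mul, one_mul, Finset.sum_mul]
  refine add_le_add (Finset.sum_le_sum fun i _ => ?_) hRT
  have hk : δ i i ^ (β i - 1) * (s - t) ≤ κ i := by
    have hb : β i - 1 ≤ 0 := by linarith [(hc.beta_pos i).2]
    rw [hδ, hκ]
    dsimp only
    split_ifs with h
    · have := rpow_le_one_of_one_le_of_nonpos hC₁ hb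
      nlinarith
    · have h1 := rpow_le_one_of_one_le_of_nonpos hCb hb
      rw [mul_rpow (by linarith) (by positivity), ← rpow_mul hR.le, mul_assoc]
      refine (mul_le_of_le_one_left (by positivity) h1).trans ?_
      rw [← rpow_add_one hR.ne']
      exact rpow_le_rpow hR.le hRT (hc.exponent_nonneg i (Nat.one_le_iff_ne_zero.2 h))
  calc d i * (CA + Q * δ i i ^ (β i - 1)) * (s - t)
      = d i * (CA * (s - t) + Q * (δ i i ^ (β i - 1) * (s - t))) := by ring
    _ ≤ d i * (CA * T + Q * κ i) := by gcongr

end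
end

section
/- In the chain setup, fix 0 ≤ t < s ≤ T with s − t ≤ 1, choose the mollification scales δ_{ij} := (s−t)^{(1+α(i−2))/(α β^j)} for 2 ≤ i ≤ j ≤ n and δ_{1j} a fixed constant, and let F^δ be the multi-scale mollification of F with these scales. Then there exists C > 0, independent of t and s, such that for all u ∈ [0,T] and all z, z' ∈ ℝ^N: (i) |𝕋_{s−t}^{-1}( F(u,z) − F^δ(u,z) )| ≤ C (s−t)^{−1}; and (ii) |𝕋_{s−t}^{-1}( F^δ(u,z) − F^δ(u,z') )| ≤ C [ (s−t)^{−1/α} + (s−t)^{−1} |𝕋_{s−t}^{-1}(z − z')| ]. -/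
/-! Everything happens blockwise. A function `G` that is Hölder in each block separately is
continuous, and its increments are sums of one-block increments (`telescope`). Mollifying block `j`
at scale `δ` changes `G` by `O(δ ^ b)` (`mol_approx`) and makes it Lipschitz in that block with
constant `O(δ ^ (b - 1))` (`exists_mol_bound`). The Lipschitz bound uses no derivative of the
mollified function: a shift by `r ≤ δ` is transferred to the mollifier by translation invariance,
and one may subtract the values of `G` with block `j` frozen (`mol_lip_small`); for `r ≥ δ` the
Hölder bound suffices.

With `h = s - t` and `δ = h ^ ((1 + α (i - 1)) / (α β))` (0-based `i ≥ 1`), the weight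
`h ^ (-(1/α + i))` times `δ ^ β` is exactly `h⁻¹` (`scale_approx`). The weighted Lipschitz
constant `δ ^ (β - 1)`, against an increment measured in units of `h ^ (1/α + j)`, is at most `h⁻¹`
precisely because `β ≥ (1 + α (i - 1)) / (1 + α j)`, which the lower bound on `β` gives for
`i ≤ j` (`scale_lip`). The component `i = 0` needs no regularisation: `r ^ β ≤ 1 + r`, and the
constant contributes the term `h ^ (-1/α)` (`component_zero`). -/

open MeasureTheory Real Set

noncomputable section

/-! ### Functions that are Hölder block by block -/

/-- `G` is Hölder in each block separately: a change of block `j` alone, by `r` in norm, changes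
`G` by at most `c j * r ^ b j`. A vanishing `c j` encodes independence of block `j`. -/
def BlockHolder {n : ℕ} {d : Fin n → ℕ} {V : Type*} [NormedAddCommGroup V]
    (c b : Fin n → ℝ) (G : E n d → V) : Prop :=
  ∀ (j : Fin n) (x x' : E n d), (∀ k, k ≠ j → x k = x' k) →
    ‖G x - G x'‖ ≤ c j * ‖x j - x' j‖ ^ b j

/-- Mollification of a single function `G`, block `j` at scale `δ j`; the components of `molF`
are of this form. -/
def mol {n : ℕ} {d : Fin n → ℕ} {V : Type*} [NormedAddCommGroup V] [NormedSpace ℝ V]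
    (ρ : E n d → ℝ) (δ : Fin n → ℝ) (G : E n d → V) (z : E n d) : V :=
  ∫ ω : E n d, ρ ω • G (fun j => z j - δ j • ω j)

section Blocks

variable {n : ℕ} {d : Fin n → ℕ} {V : Type*} [NormedAddCommGroup V]

/-- Blockwise moduli of continuity add up: pass from `x` to `x'` changing one block at a time. -/
lemma telescope (G : E n d → V) (φ : Fin n → ℝ → ℝ)
    (h : ∀ (j : Fin n) (x x' : E n d), (∀ k, k ≠ j → x k = x' k) →
      ‖G x - G x'‖ ≤ φ j ‖x j - x' j‖) (x x' : E n d) :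
    ‖G x - G x'‖ ≤ ∑ j, φ j ‖x j - x' j‖ := by
  classical
  have key : ∀ S : Finset (Fin n), ‖G x - G (S.piecewise x' x)‖ ≤ ∑ j ∈ S, φ j ‖x j - x' j‖ := by
    intro S
    induction S using Finset.induction_on with
    | empty => simp
    | insert j S hj ih =>
      rw [Finset.sum_insert hj]
      have h1 := h j (S.piecewise x' x) ((insert j S).piecewise x' x) (by
        intro k hk
        simp [Finset.piecewise, hk])
      have e1 : S.piecewise x' x j = x j := by simp [Finset.piecewise, hj]
      have e2 : (insert j S).piecewise x' x j = x' j := by simp [Finset.piecewise]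
      rw [e1, e2] at h1
      calc _ ≤ ‖G x - G (S.piecewise x' x)‖
            + ‖G (S.piecewise x' x) - G ((insert j S).piecewise x' x)‖ :=
              norm_sub_le_norm_sub_add_norm_sub _ _ _
        _ ≤ _ := by linarith
  simpa using key Finset.univ

lemma BlockHolder.continuous {c b : Fin n → ℝ} {G : E n d → V} (hG : BlockHolder c b G)
    (hb : ∀ j, 0 < b j) : Continuous G := by
  rw [continuous_iff_continuousAt]
  intro x
  have hlim : Filter.Tendsto (fun y : E n d => ∑ j, c j * ‖y j - x j‖ ^ b j) (nhds x) (nhds 0) := by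
    have hc : Continuous (fun y : E n d => ∑ j, c j * ‖y j - x j‖ ^ b j) := by
      refine continuous_finsetSum _ fun j _ => continuous_const.mul ?_
      exact Continuous.rpow_const (by fun_prop) fun _ => Or.inr (hb j).le
    have := hc.tendsto x
    simpa [Real.zero_rpow (hb _).ne'] using this
  refine tendsto_iff_norm_sub_tendsto_zero.2
    (squeeze_zero (fun _ => norm_nonneg _) (fun y => ?_) hlim)
  exact telescope G (fun j r => c j * r ^ b j) hG y x

variable [NormedSpace ℝ V]

lemma integrable_mol {ρ : E n d → ℝ} (hρ : Continuous ρ) (hs : HasCompactSupport ρ)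
    {H : E n d → V} (hH : Continuous H) : Integrable (fun ω => ρ ω • H ω) :=
  (hρ.smul hH).integrable_of_hasCompactSupport hs.smul_right

/-- Averaging against a probability density does not enlarge the blockwise Hölder constants. -/
lemma mol_holder {c b : Fin n → ℝ} {G : E n d → V} (hG : BlockHolder c b G)
    (hb : ∀ j, 0 < b j) {ρ : E n d → ℝ} (hρ : Continuous ρ) (hs : HasCompactSupport ρ)
    (h0 : ∀ ω, 0 ≤ ρ ω) (h1 : ∫ ω, ρ ω = 1) (δ : Fin n → ℝ) :
    BlockHolder c b (mol ρ δ G) := by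
  intro j x x' hx
  have hGc := hG.continuous hb
  have hi : ∀ y : E n d, Integrable (fun ω : E n d => ρ ω • G (fun k => y k - δ k • ω k)) :=
    fun y => integrable_mol hρ hs (hGc.comp (by fun_prop))
  unfold mol
  rw [← integral_sub (hi x) (hi x')]
  calc _ ≤ ∫ ω, ρ ω * (c j * ‖x j - x' j‖ ^ b j) := by
        refine norm_integral_le_of_norm_le
          ((hρ.integrable_of_hasCompactSupport hs).mul_const _) (.of_forall fun ω => ?_)
        rw [← smul_sub, norm_smul, Real.norm_of_nonneg (h0 ω)]
        refine mul_le_mul_of_nonneg_left ?_ (h0 ω)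
        refine (hG j _ _ fun k hk => ?_).trans_eq ?_
        · simp [hx k hk]
        · simp
    _ = _ := by rw [integral_mul_const, h1, one_mul]

/-- Mollification at scale `δ j` costs `δ j ^ b j` in each block. -/
lemma mol_approx [CompleteSpace V] {c b : Fin n → ℝ} {G : E n d → V} (hG : BlockHolder c b G)
    (hc : ∀ j, 0 ≤ c j) (hb : ∀ j, 0 < b j) (hb1 : ∀ j, b j ≤ 1)
    {ρ : E n d → ℝ} (hρ : Continuous ρ) (hs : HasCompactSupport ρ)
    (h0 : ∀ ω, 0 ≤ ρ ω) (h1 : ∫ ω, ρ ω = 1) {δ : Fin n → ℝ} (hδ : ∀ j, 0 < δ j)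
    {R : ℝ} (hR : 1 ≤ R) (hsupp : ∀ ω, R < ‖ω‖ → ρ ω = 0) (z : E n d) :
    ‖G z - mol ρ δ G z‖ ≤ ∑ j, c j * (R * δ j ^ b j) := by
  have hGc := hG.continuous hb
  have hz : G z = ∫ ω, ρ ω • G z := by rw [integral_smul_const, h1, one_smul]
  have hi : ∀ y : E n d, Integrable (fun ω : E n d => ρ ω • G (fun k => y k - δ k • ω k)) :=
    fun y => integrable_mol hρ hs (hGc.comp (by fun_prop))
  have hi₀ : Integrable (fun ω : E n d => ρ ω • G z) := integrable_mol hρ hs continuous_const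
  unfold mol
  rw [hz, ← integral_sub hi₀ (hi z)]
  calc _ ≤ ∫ ω, ρ ω * (∑ j, c j * (R * δ j ^ b j)) := by
        refine norm_integral_le_of_norm_le
          ((hρ.integrable_of_hasCompactSupport hs).mul_const _) (.of_forall fun ω => ?_)
        rw [← smul_sub, norm_smul, Real.norm_of_nonneg (h0 ω)]
        rcases lt_or_ge R ‖ω‖ with hω | hω
        · simp [hsupp ω hω]
        refine mul_le_mul_of_nonneg_left ?_ (h0 ω)
        refine (telescope G (fun j r => c j * r ^ b j) hG _ _).trans
          (Finset.sum_le_sum fun j _ => mul_le_mul_of_nonneg_left ?_ (hc j))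
        have hωj : ‖ω j‖ ≤ R := (norm_le_pi_norm ω j).trans hω
        rw [sub_sub_cancel, norm_smul, Real.norm_of_nonneg (hδ j).le,
          Real.mul_rpow (hδ j).le (norm_nonneg _), mul_comm]
        refine mul_le_mul_of_nonneg_right ?_ (Real.rpow_nonneg (hδ j).le _)
        calc ‖ω j‖ ^ b j ≤ R ^ b j := Real.rpow_le_rpow (norm_nonneg _) hωj (hb j).le
          _ ≤ R := Real.rpow_le_self_of_one_le hR (hb1 j)
    _ = _ := by rw [integral_mul_const, h1, one_mul]

/-- A change of block `j` by at most `δ j`: the increment is moved onto `ρ` by translation, and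
the values of `G` with block `j` frozen may be subtracted for free, since they do not see
the translation. What remains is a Lipschitz increment of `ρ` times a Hölder increment of `G`. -/
lemma mol_lip_small {c b : Fin n → ℝ} {G : E n d → V} (hG : BlockHolder c b G)
    (hc : ∀ j, 0 ≤ c j) (hb : ∀ j, 0 < b j) (hb1 : ∀ j, b j ≤ 1)
    {ρ : E n d → ℝ} (hρ : Continuous ρ) (hs : HasCompactSupport ρ)
    {L : NNReal} (hL : LipschitzWith L ρ) {δ : Fin n → ℝ} (hδ : ∀ j, 0 < δ j)
    {R : ℝ} (hR : 1 ≤ R) (hsupp : ∀ ω, R < ‖ω‖ → ρ ω = 0)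
    (j : Fin n) (z z' : E n d) (hz : ∀ k, k ≠ j → z k = z' k) (hle : ‖z j - z' j‖ ≤ δ j) :
    ‖mol ρ δ G z - mol ρ δ G z'‖ ≤
      (L * (R + 1) * volume.real (Metric.closedBall (0 : E n d) (R + 1))) *
        (c j * (δ j ^ (b j - 1) * ‖z j - z' j‖)) := by
  classical
  have hGc := hG.continuous hb
  set v : E n d := Pi.single j ((δ j)⁻¹ • (z' j - z j)) with hv
  have hvj : v j = (δ j)⁻¹ • (z' j - z j) := by simp [hv]
  have hvk : ∀ k, k ≠ j → v k = 0 := fun k hk => by simp [hv, hk]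
  have hvn : ‖v‖ = (δ j)⁻¹ * ‖z j - z' j‖ := by
    rw [hv, Pi.norm_single, norm_smul, norm_inv, Real.norm_of_nonneg (hδ j).le, norm_sub_rev]
  have hv1 : ‖v‖ ≤ 1 := by
    rw [hvn, inv_mul_le_iff₀ (hδ j)]; simpa using hle
  set G₁ : E n d → V := fun ω => G (fun k => z k - δ k • ω k) with hG₁
  set G₀ : E n d → V := fun ω => G (Function.update (fun k => z k - δ k • ω k) j (z j)) with hG₀
  have hG₁c : Continuous G₁ := hGc.comp (by fun_prop)
  have hG₀c : Continuous G₀ := hGc.comp (by fun_prop)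
  have hρv : Continuous fun ω => ρ (ω + v) := by fun_prop
  have hsv : HasCompactSupport fun ω => ρ (ω + v) :=
    hs.comp_homeomorph (Homeomorph.addRight v)
  have e1 : mol ρ δ G z' = ∫ ω, ρ (ω + v) • G₁ ω := by
    unfold mol
    rw [← integral_add_right_eq_self _ v]
    congr 1; ext1 ω; congr 2; ext1 k
    by_cases hk : k = j
    · subst hk
      rw [Pi.add_apply, hvj, smul_add, smul_smul, mul_inv_cancel₀ (hδ k).ne', one_smul]
      abel
    · rw [Pi.add_apply, hvk k hk, hz k hk, add_zero]
  have e2 : ∫ ω, ρ (ω + v) • G₀ ω = ∫ ω, ρ ω • G₀ ω := by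
    rw [← integral_add_right_eq_self (fun ω => ρ ω • G₀ ω) v]
    congr 1; ext1 ω; congr 1
    simp only [hG₀]
    congr 1; ext1 k
    by_cases hk : k = j
    · subst hk; simp
    · simp [hk, hvk k hk]
  have e3 : mol ρ δ G z - mol ρ δ G z' = ∫ ω, (ρ ω - ρ (ω + v)) • (G₁ ω - G₀ ω) := by
    have i1 := integrable_mol hρ hs hG₁c
    have i2 := integrable_mol hρ hs hG₀c
    have i3 := integrable_mol hρv hsv hG₁c
    have i4 := integrable_mol hρv hsv hG₀c
    have e4 : (fun ω => (ρ ω - ρ (ω + v)) • (G₁ ω - G₀ ω)) = fun ω =>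
        (ρ ω • G₁ ω - ρ ω • G₀ ω) - (ρ (ω + v) • G₁ ω - ρ (ω + v) • G₀ ω) := by
      ext1 ω; rw [sub_smul, smul_sub, smul_sub]
    have e5 := integral_sub (i1.sub i2) (i3.sub i4)
    simp only [Pi.sub_apply] at e5
    rw [e4, e5, integral_sub i1 i2, integral_sub i3 i4, e2, e1]
    simp only [mol, hG₁]
    abel
  rw [e3, ← setIntegral_eq_integral_of_forall_compl_eq_zero
    (s := Metric.closedBall (0 : E n d) (R + 1))]
  · refine (norm_setIntegral_le_of_norm_le_const
      (C := (L * ‖v‖) * (c j * ((R + 1) * δ j ^ b j))) measure_closedBall_lt_top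
      fun ω hω => ?_).trans_eq ?_
    · rw [norm_smul]
      have hω' : ‖ω‖ ≤ R + 1 := by simpa using hω
      have a1 : ‖ρ ω - ρ (ω + v)‖ ≤ L * ‖v‖ := by
        simpa using hL.norm_sub_le ω (ω + v)
      have a2 : ‖G₁ ω - G₀ ω‖ ≤ c j * ((R + 1) * δ j ^ b j) := by
        refine (hG j _ _ fun k hk => by simp [hk]).trans
          (mul_le_mul_of_nonneg_left ?_ (hc j))
        have hωj : ‖ω j‖ ≤ R + 1 := (norm_le_pi_norm ω j).trans hω'
        have e6 : ‖z j - δ j • ω j - Function.update (fun k => z k - δ k • ω k) j (z j) j‖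
            = ‖ω j‖ * δ j := by
          rw [Function.update_self, sub_sub_cancel_left, norm_neg, norm_smul,
            Real.norm_of_nonneg (hδ j).le, mul_comm]
        rw [e6, Real.mul_rpow (norm_nonneg _) (hδ j).le]
        refine mul_le_mul_of_nonneg_right ?_ (Real.rpow_nonneg (hδ j).le _)
        calc ‖ω j‖ ^ b j ≤ (R + 1) ^ b j := Real.rpow_le_rpow (norm_nonneg _) hωj (hb j).le
          _ ≤ R + 1 := Real.rpow_le_self_of_one_le (by linarith) (hb1 j)
      exact mul_le_mul a1 a2 (norm_nonneg _) (by positivity)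
    · rw [hvn, Real.rpow_sub_one (hδ j).ne']
      ring
  · intro ω hω
    have hω' : R + 1 < ‖ω‖ := by simpa using hω
    have hωv : R < ‖ω + v‖ := by
      have : ‖ω‖ ≤ ‖ω + v‖ + ‖v‖ := by simpa using norm_sub_le (ω + v) v
      linarith
    rw [hsupp ω (by linarith), hsupp _ hωv, sub_zero, zero_smul]

/-- The two quantitative properties of mollification, with one constant depending on the mollifier
only. Increments of block `j` larger than `δ j` are handled by the Hölder bound, since
`r ^ b ≤ δ ^ (b - 1) * r` for `r ≥ δ`. -/
lemma exists_mol_bound [CompleteSpace V] {ρ : E n d → ℝ} (hρ : ContDiff ℝ (⊤ : ℕ∞) ρ)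
    (hs : HasCompactSupport ρ)
    (h0 : ∀ ω, 0 ≤ ρ ω) (h1 : ∫ ω, ρ ω = 1) :
    ∃ M : ℝ, 1 ≤ M ∧ ∀ (c b : Fin n → ℝ) (G : E n d → V), BlockHolder c b G →
      (∀ j, 0 ≤ c j) → (∀ j, 0 < b j) → (∀ j, b j ≤ 1) →
      ∀ δ : Fin n → ℝ, (∀ j, 0 < δ j) → ∀ z z' : E n d,
        ‖G z - mol ρ δ G z‖ ≤ ∑ j, c j * (M * δ j ^ b j) ∧
        ‖mol ρ δ G z - mol ρ δ G z'‖ ≤ ∑ j, c j * (M * (δ j ^ (b j - 1) * ‖z j - z' j‖)) := by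
  obtain ⟨L, hL⟩ := hρ.lipschitzWith_of_hasCompactSupport hs (by simp)
  obtain ⟨R₀, hR₀⟩ := hs.isCompact.isBounded.subset_closedBall (0 : E n d)
  set R := max 1 R₀
  have hR : 1 ≤ R := le_max_left _ _
  have hsupp : ∀ ω, R < ‖ω‖ → ρ ω = 0 := by
    intro ω hω
    by_contra hne
    have := hR₀ (subset_tsupport ρ hne)
    rw [mem_closedBall_zero_iff] at this
    exact absurd (hω.trans_le this) (not_lt.2 (le_max_right _ _))
  set M₁ := L * (R + 1) * volume.real (Metric.closedBall (0 : E n d) (R + 1))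
  refine ⟨max R M₁, hR.trans (le_max_left _ _), fun c b G hG hc hb hb1 δ hδ z z' => ⟨?_, ?_⟩⟩
  · refine (mol_approx hG hc hb hb1 hρ.continuous hs h0 h1 hδ hR hsupp z).trans
      (Finset.sum_le_sum fun j _ => mul_le_mul_of_nonneg_left
        (mul_le_mul_of_nonneg_right (le_max_left _ _) (Real.rpow_nonneg (hδ j).le _)) (hc j))
  · refine telescope (mol ρ δ G) (fun j r => c j * (max R M₁ * (δ j ^ (b j - 1) * r)))
      (fun j x x' hx => ?_) z z'
    have hnn : 0 ≤ c j * (δ j ^ (b j - 1) * ‖x j - x' j‖) :=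
      mul_nonneg (hc j) (mul_nonneg (Real.rpow_nonneg (hδ j).le _) (norm_nonneg _))
    have hfac : ∀ a, a ≤ max R M₁ → a * (c j * (δ j ^ (b j - 1) * ‖x j - x' j‖)) ≤
        c j * (max R M₁ * (δ j ^ (b j - 1) * ‖x j - x' j‖)) := fun a ha =>
      (mul_le_mul_of_nonneg_right ha hnn).trans_eq (by ring)
    rcases le_total ‖x j - x' j‖ (δ j) with hle | hge
    · exact (mol_lip_small hG hc hb hb1 hρ.continuous hs hL hδ hR hsupp j x x' hx hle).trans
        (hfac M₁ (le_max_right _ _))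
    · refine le_trans ?_ (hfac 1 (hR.trans (le_max_left _ _)))
      refine (mol_holder hG hb hρ.continuous hs h0 h1 δ j x x' hx).trans ?_
      rw [one_mul]
      refine mul_le_mul_of_nonneg_left ?_ (hc j)
      have hr : 0 < ‖x j - x' j‖ := (hδ j).trans_le hge
      calc ‖x j - x' j‖ ^ b j = ‖x j - x' j‖ ^ (b j - 1) * ‖x j - x' j‖ := by
            rw [Real.rpow_sub_one hr.ne', div_mul_cancel₀ _ hr.ne']
        _ ≤ _ := mul_le_mul_of_nonneg_right
            (Real.rpow_le_rpow_of_nonpos (hδ j) hge (by linarith [hb1 j])) hr.le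

end Blocks

/-! ### Arithmetic of the scales -/

lemma norm_block_le {n : ℕ} {d : Fin n → ℕ} {α h : ℝ} (hh : 0 < h) (x : E n d) (j : Fin n) :
    ‖x j‖ ≤ h ^ ((1 : ℝ) / α + ((j : ℕ) : ℝ)) * ‖Tinv α h x‖ := by
  have hp : 0 < h ^ ((1 : ℝ) / α + ((j : ℕ) : ℝ)) := Real.rpow_pos_of_pos hh _
  have := norm_le_pi_norm (Tinv α h x) j
  rw [Tinv, norm_smul, norm_inv, Real.norm_of_nonneg hp.le, inv_mul_le_iff₀ hp] at this
  exact this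

/-- The scale `δ = h ^ ((1 + α (i - 1)) / (α β))` turns the approximation error `δ ^ β`, seen
through the `i`-th weight of `𝕋_h⁻¹`, into exactly `h⁻¹`. -/
lemma scale_approx {α h β i : ℝ} (hα : 0 < α) (hh : 0 < h) (hβ : 0 < β) :
    (h ^ (1 / α + i))⁻¹ * (h ^ ((1 + α * (i - 1)) / (α * β))) ^ β = h⁻¹ := by
  rw [← Real.rpow_neg hh.le, ← Real.rpow_mul hh.le, ← Real.rpow_add hh, ← Real.rpow_neg_one]
  congr 1
  field_simp
  ring

/-- The lower bound on `β` is what makes the Lipschitz constant `δ ^ (β - 1)` affordable for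
`i ≤ j`, after `r` has been measured in the `j`-th weight of `𝕋_h`. -/
lemma scale_lip {α h β i j : ℝ} (hα : 0 < α) (hh : 0 < h) (hh1 : h ≤ 1) (hβ : 0 < β)
    (hj : 1 ≤ j) (hij : i ≤ j) (hlow : (1 + α * (j - 1)) / (1 + α * j) < β) :
    (h ^ (1 / α + i))⁻¹ * ((h ^ ((1 + α * (i - 1)) / (α * β))) ^ (β - 1) * h ^ (1 / α + j))
      ≤ h⁻¹ := by
  rw [← Real.rpow_neg hh.le, ← Real.rpow_mul hh.le, ← Real.rpow_add hh, ← Real.rpow_add hh,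
    ← Real.rpow_neg_one]
  refine Real.rpow_le_rpow_of_exponent_ge hh hh1 ?_
  have hpos : 0 < 1 + α * j := by positivity
  rw [div_lt_iff₀ hpos] at hlow
  have hkey : 1 + α * (i - 1) ≤ β * (1 + α * j) := by
    have : α * (i - 1) ≤ α * (j - 1) := mul_le_mul_of_nonneg_left (by linarith) hα.le
    linarith
  have e : -(1 / α + i) + ((1 + α * (i - 1)) / (α * β) * (β - 1) + (1 / α + j)) - -1
      = (β * (1 + α * j) - (1 + α * (i - 1))) / (α * β) := by
    field_simp
    ring
  have : 0 ≤ (β * (1 + α * j) - (1 + α * (i - 1))) / (α * β) :=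
    div_nonneg (by linarith) (by positivity)
  linarith

/-! ### The two estimates, component by component -/

/-- The drift component `i = 0`: no regularisation is needed, since `r ^ β ≤ 1 + r` and
`h ^ (-1/α) ≤ h⁻¹`. -/
lemma component_zero {n : ℕ} {d : Fin n → ℕ} {α CH b c₁ : ℝ} (hα : 1 < α) (hCH : 0 < CH)
    (hb : 0 < b) (hb1 : b ≤ 1) (hc₁ : 0 < c₁) {V : Type*} [NormedAddCommGroup V]
    [NormedSpace ℝ V] [CompleteSpace V] {ρ : E n d → ℝ} (hρ : ContDiff ℝ (⊤ : ℕ∞) ρ)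
    (hs : HasCompactSupport ρ) (h0 : ∀ ω, 0 ≤ ρ ω) (h1 : ∫ ω, ρ ω = 1) :
    ∃ C : ℝ, 0 ≤ C ∧ ∀ (G : E n d → V), BlockHolder (fun _ => CH) (fun _ => b) G →
      ∀ h, 0 < h → h ≤ 1 → ∀ z z' : E n d,
        (h ^ (1 / α))⁻¹ * ‖G z - mol ρ (fun _ => c₁) G z‖ ≤ C * h⁻¹ ∧
        (h ^ (1 / α))⁻¹ * ‖mol ρ (fun _ => c₁) G z - mol ρ (fun _ => c₁) G z'‖ ≤
          C * (h ^ (-(1 / α)) + h⁻¹ * ‖Tinv α h (z - z')‖) := by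
  obtain ⟨M, hM, hbd⟩ := exists_mol_bound (V := V) hρ hs h0 h1
  have hα0 : 0 < α := by linarith
  have hnn : 0 ≤ n * (CH * (M * c₁ ^ b)) := by positivity
  refine ⟨n * (CH * (M * c₁ ^ b)) + n * CH, by positivity, fun G hG h hh hh1 z z' => ?_⟩
  have hp : 0 < h ^ (1 / α) := Real.rpow_pos_of_pos hh _
  refine ⟨?_, ?_⟩
  · have hw : (h ^ (1 / α))⁻¹ ≤ h⁻¹ := by
      rw [← Real.rpow_neg hh.le, ← Real.rpow_neg_one]
      refine Real.rpow_le_rpow_of_exponent_ge hh hh1 (neg_le_neg ?_)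
      rw [div_le_one hα0]; exact hα.le
    have := (hbd _ _ G hG (fun _ => hCH.le) (fun _ => hb) (fun _ => hb1) _ (fun _ => hc₁) z z').1
    rw [Finset.sum_const, Finset.card_univ, Fintype.card_fin, nsmul_eq_mul] at this
    calc _ ≤ h⁻¹ * (n * (CH * (M * c₁ ^ b)) + n * CH) :=
          mul_le_mul hw (by nlinarith [mul_nonneg (Nat.cast_nonneg (α := ℝ) n) hCH.le])
            (norm_nonneg _) (by positivity)
      _ = _ := mul_comm _ _
  · set τ := ‖Tinv α h (z - z')‖ with hτ
    have hτ0 : 0 ≤ τ := norm_nonneg _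
    have hH := telescope _ (fun _ r => CH * r ^ b)
      (mol_holder hG (fun _ => hb) hρ.continuous hs h0 h1 (fun _ => c₁)) z z'
    have hterm : ∀ j : Fin n, CH * ‖z j - z' j‖ ^ b ≤ CH * (1 + h ^ (1 / α) * (h⁻¹ * τ)) := by
      intro j
      refine mul_le_mul_of_nonneg_left ?_ hCH.le
      have hj : ‖z j - z' j‖ ≤ h ^ (1 / α) * (h⁻¹ * τ) := by
        refine (norm_block_le (α := α) hh (z - z') j).trans ?_
        rw [← mul_assoc]
        refine mul_le_mul_of_nonneg_right ?_ hτ0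
        rw [← Real.rpow_neg_one, ← Real.rpow_add hh]
        refine Real.rpow_le_rpow_of_exponent_ge hh hh1 ?_
        have : (0 : ℝ) ≤ ((j : ℕ) : ℝ) := Nat.cast_nonneg _
        linarith
      have hr := norm_nonneg (z j - z' j)
      rcases le_total ‖z j - z' j‖ 1 with hle | hge
      · linarith [Real.rpow_le_one hr hle hb.le]
      · linarith [Real.rpow_le_self_of_one_le hge hb1]
    have hsum : ∑ j : Fin n, CH * ‖z j - z' j‖ ^ b ≤ n * (CH * (1 + h ^ (1 / α) * (h⁻¹ * τ))) := by
      simpa using Finset.sum_le_sum fun j (_ : j ∈ Finset.univ) => hterm j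
    rw [Real.rpow_neg hh.le]
    calc _ ≤ (h ^ (1 / α))⁻¹ * (n * (CH * (1 + h ^ (1 / α) * (h⁻¹ * τ)))) :=
          mul_le_mul_of_nonneg_left (hH.trans hsum) (by positivity)
      _ = n * CH * ((h ^ (1 / α))⁻¹ + h⁻¹ * τ) := by field_simp
      _ ≤ _ := mul_le_mul_of_nonneg_right (by linarith) (by positivity)

/-- The degenerate components `i ≥ 1`. The Hölder constants vanish for the blocks `j < i`, on
which the component does not depend. -/
lemma component_pos {n : ℕ} {d : Fin n → ℕ} {α CH : ℝ} {β : Fin n → ℝ} (hα : 1 < α)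
    (hCH : 0 < CH) (hβ0 : ∀ j, 0 < β j) (hβ1 : ∀ j, β j ≤ 1)
    (hβ : ∀ j : Fin n, 1 ≤ (j : ℕ) →
      (1 + α * (((j : ℕ) : ℝ) - 1)) / (1 + α * ((j : ℕ) : ℝ)) < β j)
    (i : Fin n) (hi : 1 ≤ (i : ℕ)) {V : Type*} [NormedAddCommGroup V]
    [NormedSpace ℝ V] [CompleteSpace V] {ρ : E n d → ℝ} (hρ : ContDiff ℝ (⊤ : ℕ∞) ρ)
    (hs : HasCompactSupport ρ) (h0 : ∀ ω, 0 ≤ ρ ω) (h1 : ∫ ω, ρ ω = 1) :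
    ∃ C : ℝ, 0 ≤ C ∧ ∀ (G : E n d → V), BlockHolder (fun j => if i ≤ j then CH else 0) β G →
      ∀ h, 0 < h → h ≤ 1 → ∀ δ : Fin n → ℝ,
      (δ = fun j => h ^ ((1 + α * (((i : ℕ) : ℝ) - 1)) / (α * β j))) → ∀ z z' : E n d,
        (h ^ (1 / α + ((i : ℕ) : ℝ)))⁻¹ * ‖G z - mol ρ δ G z‖ ≤ C * h⁻¹ ∧
        (h ^ (1 / α + ((i : ℕ) : ℝ)))⁻¹ * ‖mol ρ δ G z - mol ρ δ G z'‖ ≤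
          C * (h⁻¹ * ‖Tinv α h (z - z')‖) := by
  obtain ⟨M, hM, hbd⟩ := exists_mol_bound (V := V) hρ hs h0 h1
  have hα0 : 0 < α := by linarith
  refine ⟨n * (CH * M), by positivity, fun G hG h hh hh1 δ hδ z z' => ?_⟩
  have hδpos : ∀ j, 0 < δ j := fun j => by rw [hδ]; exact Real.rpow_pos_of_pos hh _
  obtain ⟨b1, b2⟩ := hbd _ _ G hG (fun j => by split_ifs <;> simp [hCH.le]) hβ0 hβ1 δ hδpos z z'
  have hw : 0 ≤ (h ^ (1 / α + ((i : ℕ) : ℝ)))⁻¹ := by positivity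
  -- both estimates reduce to a bound on the contribution of each block `j ≥ i`
  have hred : ∀ (X : ℝ) (a : Fin n → ℝ) (B : ℝ), 0 ≤ B →
      X ≤ ∑ j, (if i ≤ j then CH else 0) * (M * a j) →
      (∀ j, i ≤ j → (h ^ (1 / α + ((i : ℕ) : ℝ)))⁻¹ * a j ≤ B) →
      (h ^ (1 / α + ((i : ℕ) : ℝ)))⁻¹ * X ≤ n * (CH * M) * B := by
    intro X a B hB hX ha
    refine (mul_le_mul_of_nonneg_left hX hw).trans ?_
    rw [Finset.mul_sum]
    have : ∀ j ∈ Finset.univ, (h ^ (1 / α + ((i : ℕ) : ℝ)))⁻¹ *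
        ((if i ≤ j then CH else 0) * (M * a j)) ≤ CH * M * B := by
      intro j _
      split_ifs with hij
      · calc _ = CH * M * ((h ^ (1 / α + ((i : ℕ) : ℝ)))⁻¹ * a j) := by ring
          _ ≤ _ := mul_le_mul_of_nonneg_left (ha j hij) (by positivity)
      · simp only [zero_mul, mul_zero]; positivity
    refine (Finset.sum_le_sum this).trans_eq ?_
    simp [mul_assoc]
  refine ⟨hred _ _ _ (by positivity) b1 fun j _ => ?_,
    hred _ _ _ (by positivity) b2 fun j hij => ?_⟩
  · rw [hδ]; exact (scale_approx hα0 hh (hβ0 j)).le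
  · have hij' : (i : ℕ) ≤ (j : ℕ) := hij
    have hnb := norm_block_le (α := α) hh (z - z') j
    have hsc := scale_lip (i := ((i : ℕ) : ℝ)) hα0 hh hh1 (hβ0 j)
      (by exact_mod_cast hi.trans hij') (by exact_mod_cast hij') (hβ j (hi.trans hij'))
    have hδj : 0 ≤ δ j ^ (β j - 1) := Real.rpow_nonneg (hδpos j).le _
    calc _ ≤ (h ^ (1 / α + ((i : ℕ) : ℝ)))⁻¹ * (δ j ^ (β j - 1) *
            (h ^ ((1 : ℝ) / α + ((j : ℕ) : ℝ)) * ‖Tinv α h (z - z')‖)) :=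
          mul_le_mul_of_nonneg_left (mul_le_mul_of_nonneg_left hnb hδj) hw
      _ = (h ^ (1 / α + ((i : ℕ) : ℝ)))⁻¹ * (δ j ^ (β j - 1) *
            h ^ ((1 : ℝ) / α + ((j : ℕ) : ℝ))) * ‖Tinv α h (z - z')‖ := by ring
      _ ≤ _ := mul_le_mul_of_nonneg_right (by rw [hδ]; exact hsc) (norm_nonneg _)

/-- Eqs. (proof:bilip_control) and (approximateLippourF).  With the
mollification scales `δ_{ij} = (s−t)^{(1+α(i−2))/(αβ^j)}` for `2 ≤ i ≤ j ≤ n` (0-indexed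
below: `(s−t)^{(1+α(i−1))/(αβ_j)}` for `1 ≤ i`) and `δ_{1j} = c₁` a fixed constant, the
mollified drift satisfies, for some `C` independent of `t, s`, for all `u ∈ [0,T]`, `z, z'`:
(i) `|𝕋_{s−t}⁻¹(F(u,z) − F^δ(u,z))| ≤ C (s−t)^{−1}`;
(ii) `|𝕋_{s−t}⁻¹(F^δ(u,z) − F^δ(u,z'))| ≤ C [(s−t)^{−1/α} + (s−t)^{−1} |𝕋_{s−t}⁻¹(z−z')|]`. -/
theorem stmt13 {n : ℕ} [NeZero n] {d : Fin n → ℕ} {α T K : ℝ}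
    {A : ℝ → E n d →L[ℝ] E n d} {F : ℝ → E n d → E n d} {β : Fin n → ℝ}
    (hc : ChainHyp n d α T K A F β)
    (ρ : Fin n → E n d → ℝ) (hρ : IsMollifier ρ) :
    ∀ c₁ : ℝ, 0 < c₁ → ∃ C : ℝ, 0 < C ∧
      ∀ t s : ℝ, 0 ≤ t → t < s → s ≤ T → s - t ≤ 1 →
      ∀ δ : Fin n → Fin n → ℝ,
        (δ = fun (i j : Fin n) => if (i : ℕ) = 0 then c₁ else
          (s - t) ^ ((1 + α * (((i : ℕ) : ℝ) - 1)) / (α * β j))) →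
      ∀ u : ℝ, u ∈ Icc (0 : ℝ) T → ∀ z z' : E n d,
        ‖Tinv α (s - t) (F u z - molF ρ δ F u z)‖ ≤ C * (s - t)⁻¹ ∧
        ‖Tinv α (s - t) (molF ρ δ F u z - molF ρ δ F u z')‖ ≤
          C * ((s - t) ^ (-(1 / α)) + (s - t)⁻¹ * ‖Tinv α (s - t) (z - z')‖) := by
  intro c₁ hc₁
  obtain ⟨CH, hCH, hH0, hHi⟩ := hc.hHolder
  have hα0 : 0 < α := by linarith [hc.hα₁]
  have hval : ∀ j : Fin n, j ≠ 0 → 1 ≤ (j : ℕ) := fun j hj =>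
    Nat.one_le_iff_ne_zero.2 fun h => hj (Fin.ext (by simpa using h))
  have hβpos : ∀ j, 0 < β j := by
    intro j
    by_cases hj : j = 0
    · subst hj; exact hc.hβ0.1
    · refine lt_of_le_of_lt ?_ (hc.hβ j (hval j hj)).1
      have : (1 : ℝ) ≤ ((j : ℕ) : ℝ) := by exact_mod_cast hval j hj
      exact div_nonneg (by nlinarith) (by positivity)
  have hβ1 : ∀ j, β j ≤ 1 := by
    intro j
    by_cases hj : j = 0
    · subst hj; exact hc.hβ0.2
    · exact (hc.hβ j (hval j hj)).2
  have hcomp : ∀ i : Fin n, ∃ C : ℝ, 0 ≤ C ∧ ∀ h, 0 < h → h ≤ 1 → ∀ δ : Fin n → Fin n → ℝ,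
      (δ = fun (i j : Fin n) => if (i : ℕ) = 0 then c₁ else
          h ^ ((1 + α * (((i : ℕ) : ℝ) - 1)) / (α * β j))) → ∀ (u : ℝ) (z z' : E n d),
      (h ^ (1 / α + ((i : ℕ) : ℝ)))⁻¹ * ‖F u z i - molF ρ δ F u z i‖ ≤ C * h⁻¹ ∧
      (h ^ (1 / α + ((i : ℕ) : ℝ)))⁻¹ * ‖molF ρ δ F u z i - molF ρ δ F u z' i‖ ≤
        C * (h ^ (-(1 / α)) + h⁻¹ * ‖Tinv α h (z - z')‖) := by
    intro i
    obtain ⟨hr, hs, h0, h1⟩ := hρ i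
    by_cases hi : i = 0
    · subst hi
      obtain ⟨C, hC, hbd⟩ := component_zero (V := Fin (d 0) → ℝ) hc.hα₁ hCH hc.hβ0.1 hc.hβ0.2 hc₁
        hr hs h0 h1
      refine ⟨C, hC, fun h hh hh1 δ hδ u z z' => ?_⟩
      have hδ0 : δ 0 = fun _ => c₁ := by rw [hδ]; simp
      have := hbd (fun x => F u x 0) (fun j x x' hx => hH0 j u x x' hx) h hh hh1 z z'
      rw [← hδ0] at this
      simpa [molF, mol] using this
    · obtain ⟨C, hC, hbd⟩ := component_pos (V := Fin (d i) → ℝ) hc.hα₁ hCH hβpos hβ1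
        (fun j hj => (hc.hβ j hj).1) i (hval i hi) hr hs h0 h1
      refine ⟨C, hC, fun h hh hh1 δ hδ u z z' => ?_⟩
      have hδi : δ i = fun j => h ^ ((1 + α * (((i : ℕ) : ℝ) - 1)) / (α * β j)) := by
        rw [hδ]; simp [hi]
      have hBH : BlockHolder (fun j => if i ≤ j then CH else 0) β (fun x => F u x i) := by
        intro j x x' hx
        by_cases hij : i ≤ j
        · simpa [hij] using hHi i j (hval i hi) hij u x x' hx
        · have : F u x i = F u x' i := hc.hFdep i u x x' fun k hk =>
            hx k fun hkj => hij (hkj ▸ hk)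
          simp [hij, this]
      obtain ⟨a1, a2⟩ := hbd _ hBH h hh hh1 (δ i) hδi z z'
      refine ⟨a1, a2.trans (mul_le_mul_of_nonneg_left ?_ hC)⟩
      exact le_add_of_nonneg_left (Real.rpow_nonneg hh.le _)
  choose C hC hbd using hcomp
  have hS : 0 ≤ ∑ i, C i := Finset.sum_nonneg fun i _ => hC i
  have hle : ∀ i, C i ≤ 1 + ∑ i, C i := fun i => by
    linarith [Finset.single_le_sum (fun i _ => hC i) (Finset.mem_univ i)]
  refine ⟨1 + ∑ i, C i, by linarith, fun t s _ hts _ hst1 δ hδ u _ z z' => ?_⟩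
  have hh : 0 < s - t := by linarith
  have hnorm : ∀ (x : E n d) (i : Fin n), ‖Tinv α (s - t) x i‖ =
      ((s - t) ^ (1 / α + ((i : ℕ) : ℝ)))⁻¹ * ‖x i‖ := fun x i => by
    rw [Tinv, norm_smul, norm_inv, Real.norm_of_nonneg (Real.rpow_nonneg hh.le _)]
  have hB : 0 ≤ (s - t) ^ (-(1 / α)) + (s - t)⁻¹ * ‖Tinv α (s - t) (z - z')‖ := by positivity
  refine ⟨(pi_norm_le_iff_of_nonneg (by positivity)).2 fun i => ?_,
    (pi_norm_le_iff_of_nonneg (by positivity)).2 fun i => ?_⟩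
  · rw [hnorm]
    exact ((hbd i (s - t) hh hst1 δ hδ u z z').1).trans
      (mul_le_mul_of_nonneg_right (hle i) (by positivity))
  · rw [hnorm]
    exact ((hbd i (s - t) hh hst1 δ hδ u z z').2).trans
      (mul_le_mul_of_nonneg_right (hle i) hB)

end
end

section
/- In the chain setup, fix 0 ≤ t < s ≤ T, set δ_{1j} := C₁ for all j and δ_{ij} := C̄ (s−t)^{(1+α(j−2))/(α β^j)} for 2 ≤ i ≤ j ≤ n with C̄, C₁ large enough constants, and let F^δ be the multi-scale mollification of F with these scales. Let θ be a flow for (A,F) and let θ^δ_{t,s}(y) be the backward flow of ẏ_u = A_u y_u + F^δ(u, y_u) with terminal value y at time s. Then there exists a constant C₀ > 0, independent of t, s, y and of δ, such that |𝕋_{s−t}^{-1}( θ_{t,s}(y) − θ^δ_{t,s}(y) )| ≤ C₀ for all y ∈ ℝ^N. -/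
/-!
Write `h = s - t`, `e_u = θ_{u,s}(y) - θ^δ_{u,s}(y)` and `φ(u) = ‖𝕋_h⁻¹ e_u‖`. Everything reduces to
the linear inequality `1 + φ(u) ≤ 1 + (C / h) ∫_u^s (1 + φ(v)) dv` on `[t, s]`, for which Grönwall's
lemma (`backward_gronwall`) gives a bound depending on `C` only, since the interval has length `h`.

The inequality follows from the estimate `drift_diff_le`: the `i`-th block (0-indexed) of the
difference of the two drifts is at most `C h^{1/α + i - 1} (1 + φ)`, one factor `h` better than the
normalisation `h^{1/α + i}` of that block once integrated in time. With `‖e_j‖ ≤ h^{1/α + j} φ` and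
`h ≤ T`, the three contributions are controlled as follows.

* `A e`: block `i` involves only the `e_j` with `j ≥ i - 1`, so the exponents are large enough.
* `F(θ) - F(θ^δ)`: Hölder continuity gives `‖e_j‖ ^ β_j ≤ h^{(1/α + j) β_j} (1 + φ)`, and the lower
  bound on `β_j` says exactly that `(1/α + j) β_j > 1/α + j - 1 ≥ 1/α + i - 1`. Only the power of
  `h` has to be kept; `φ ^ β_j ≤ 1 + φ` removes the Hölder exponent, so no Lipschitz bound on
  `F^δ` is needed. For `i = 0` the target exponent `1/α - 1` is negative, because `α > 1`, and any
  bounded power of `h` is admissible.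
* `F - F^δ`: at most a constant times `∑_{j ≥ i} δ_{ij} ^ β_j`, and the scales are chosen so that
  `δ_{ij} ^ β_j` is a multiple of `h^{1/α + j - 1}`.

Since the Bochner integral vanishes on non-integrable functions, the integral equations do not say
by themselves that the velocities are integrable; this is proved in `flow_intervalIntegrable` from
the linear growth of the drifts.
-/
open MeasureTheory Real Set

noncomputable section

/-! ### Grönwall's inequality and integrability along a flow -/

/-- Integral Grönwall inequality run backwards from the terminal time `s`. The constants come from
maximising `ψ v * exp (-2 B (s - v))` over the interval. -/
lemma backward_gronwall {ψ : ℝ → ℝ} {a s P B : ℝ} (hB : 0 < B) (hP : 0 ≤ P)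
    (hψc : ContinuousOn ψ (Icc a s))
    (hψ : ∀ u ∈ Icc a s, ψ u ≤ P + B * ∫ v in u..s, ψ v) :
    ∀ u ∈ Icc a s, ψ u ≤ 2 * P * exp (2 * B * (s - u)) := by
  intro u hu
  have hcont : ContinuousOn (fun v => ψ v * exp (-(2 * B * (s - v)))) (Icc a s) :=
    hψc.mul (by fun_prop)
  obtain ⟨m, hm, hmax⟩ := isCompact_Icc.exists_isMaxOn ⟨u, hu⟩ hcont
  set M := ψ m * exp (-(2 * B * (s - m))) with hM
  have hle : ∀ v ∈ Icc a s, ψ v ≤ M * exp (2 * B * (s - v)) := by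
    intro v hv
    have h1 : ψ v * exp (-(2 * B * (s - v))) ≤ M := hmax hv
    rw [exp_neg, ← div_eq_mul_inv, div_le_iff₀ (exp_pos _)] at h1
    exact h1
  have hint : ∫ v in m..s, M * exp (2 * B * (s - v)) =
      M / (2 * B) * (exp (2 * B * (s - m)) - 1) := by
    have hd : ∀ v ∈ uIcc m s, HasDerivAt (fun v => -(M / (2 * B)) * exp (2 * B * (s - v)))
        (M * exp (2 * B * (s - v))) v := by
      intro v _
      have h1 : HasDerivAt (fun v : ℝ => 2 * B * (s - v)) (2 * B * (-1)) v :=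
        ((hasDerivAt_id v).const_sub s).const_mul (2 * B)
      have h2 := (h1.exp).const_mul (-(M / (2 * B)))
      refine h2.congr_deriv ?_
      field_simp
    rw [intervalIntegral.integral_eq_sub_of_hasDerivAt hd
      (Continuous.intervalIntegrable (by fun_prop) _ _)]
    simp
    ring
  have hmono : ∫ v in m..s, ψ v ≤ ∫ v in m..s, M * exp (2 * B * (s - v)) := by
    apply intervalIntegral.integral_mono_on hm.2
    · apply ContinuousOn.intervalIntegrable
      rw [uIcc_of_le hm.2]
      exact hψc.mono (Icc_subset_Icc_left hm.1)
    · exact Continuous.intervalIntegrable (by fun_prop) _ _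
    · exact fun v hv => hle v ⟨hm.1.trans hv.1, hv.2⟩
  have hexp : 1 ≤ exp (2 * B * (s - m)) := by
    apply one_le_exp
    have := hm.2
    have : 0 ≤ s - m := by linarith
    positivity
  have hMm : ψ m = M * exp (2 * B * (s - m)) := by
    rw [hM, mul_assoc, ← exp_add]
    simp
  -- At the maximiser the inequality reads `M e ≤ P + (M / 2) (e - 1)` with `e ≥ 1`.
  have hkey : M * exp (2 * B * (s - m)) ≤ P + M / 2 * (exp (2 * B * (s - m)) - 1) := by
    have h1 := hψ m hm
    have h2 : B * ∫ v in m..s, ψ v ≤ B * (M / (2 * B) * (exp (2 * B * (s - m)) - 1)) := by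
      rw [← hint]
      gcongr
    have h3 : B * (M / (2 * B) * (exp (2 * B * (s - m)) - 1)) =
        M / 2 * (exp (2 * B * (s - m)) - 1) := by
      field_simp
    linarith
  have hM2 : M ≤ 2 * P := by
    by_contra! hcon
    nlinarith
  exact (hle u hu).trans (by gcongr)

lemma continuousOn_of_integral_eq {V : Type*} [NormedAddCommGroup V] [NormedSpace ℝ V]
    {g x : ℝ → V} {a s : ℝ} {z : V} (has : a ≤ s)
    (hg : IntervalIntegrable g volume a s)
    (hx : ∀ t ∈ Icc a s, x t = z - ∫ u in t..s, g u) : ContinuousOn x (Icc a s) := by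
  have h1 : ContinuousOn (fun t => z - ∫ u in t..s, g u) (Icc a s) := by
    have := intervalIntegral.continuousOn_primitive_interval_left (μ := volume) (f := g)
      (a := a) (b := s) (by rw [uIcc_of_le has]; exact (intervalIntegrable_iff_integrableOn_Icc_of_le has).1 hg)
    rw [uIcc_of_le has] at this
    exact continuousOn_const.sub this
  exact h1.congr hx

/-- A solution of a backward integral equation with a drift of linear growth has an integrable
velocity, even though the integral in the equation is `0` by convention when it does not exist.

Let `S` be the set of times `t` for which the velocity is integrable on `[t, s]`. On `S` Grönwall
bounds the solution by a constant independent of `t`, hence `c = inf S` lies in `S`. To the left of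
`c` the convention forces the solution to be the constant `z`, and then the velocity is bounded and
measurable there as well. -/
lemma flow_intervalIntegrable_s14 {V : Type*} [NormedAddCommGroup V] [NormedSpace ℝ V]
    {G : ℝ → V → V} {x : ℝ → V} {s C : ℝ} {z : V} (hs : 0 ≤ s) (hC : 0 < C)
    (hG : ∀ u y, ‖G u y‖ ≤ C * (1 + ‖y‖))
    (hmeas : AEStronglyMeasurable (fun u => G u z) volume)
    (hx : ∀ t ∈ Icc 0 s, x t = z - ∫ u in t..s, G u (x u)) :
    IntervalIntegrable (fun u => G u (x u)) volume 0 s := by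
  set g := fun u => G u (x u) with hg
  set M := 2 * (1 + ‖z‖) * exp (2 * C * s) with hM
  have hzM : 1 + ‖z‖ ≤ M := by
    have : 1 ≤ exp (2 * C * s) := one_le_exp (by positivity)
    have := norm_nonneg z
    nlinarith
  set S := {t | t ∈ Icc 0 s ∧ IntervalIntegrable g volume t s} with hS
  have hup : ∀ t ∈ S, ∀ t' ∈ Icc t s, t' ∈ S := by
    intro t ht t' ht'
    refine ⟨⟨ht.1.1.trans ht'.1, ht'.2⟩, ht.2.mono_set ?_⟩
    rw [uIcc_of_le ht'.2, uIcc_of_le ht.1.2]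
    exact Icc_subset_Icc_left ht'.1
  have hbd : ∀ t ∈ Icc 0 s, 1 + ‖x t‖ ≤ M := by
    intro t ht
    by_cases htS : t ∈ S
    · have hc : ContinuousOn x (Icc t s) := continuousOn_of_integral_eq ht.2 htS.2
        fun u hu => hx u ⟨ht.1.trans hu.1, hu.2⟩
      have hc' : ContinuousOn (fun u => 1 + ‖x u‖) (Icc t s) := by fun_prop
      have := backward_gronwall (ψ := fun u => 1 + ‖x u‖) (a := t) (s := s) (P := 1 + ‖z‖)
        hC (by positivity) hc' ?_ t ⟨le_rfl, ht.2⟩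
      · refine this.trans ?_
        rw [hM]
        have := ht.1
        gcongr
        linarith
      · intro u hu
        have h1 : ‖∫ v in u..s, g v‖ ≤ ∫ v in u..s, C * (1 + ‖x v‖) := by
          apply intervalIntegral.norm_integral_le_of_norm_le hu.2
          · exact Filter.Eventually.of_forall fun v _ => hG v (x v)
          · apply ContinuousOn.intervalIntegrable
            rw [uIcc_of_le hu.2]
            exact (continuousOn_const.mul hc').mono (Icc_subset_Icc_left hu.1)
        rw [intervalIntegral.integral_const_mul] at h1
        have h2 : ‖x u‖ ≤ ‖z‖ + ‖∫ v in u..s, g v‖ := by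
          rw [hx u ⟨ht.1.trans hu.1, hu.2⟩]
          exact norm_sub_le _ _
        show 1 + ‖x u‖ ≤ _
        linarith
    · have : ¬ IntervalIntegrable g volume t s := fun h => htS ⟨ht, h⟩
      have h1 := hx t ht
      rw [intervalIntegral.integral_undef this, sub_zero] at h1
      rw [h1]
      exact hzM
  have hgM : ∀ t ∈ Icc 0 s, ‖g t‖ ≤ C * M := fun t ht =>
    (hG t (x t)).trans (by gcongr; exact hbd t ht)
  have hsS : s ∈ S := ⟨⟨hs, le_rfl⟩, IntervalIntegrable.refl⟩
  have hSb : BddBelow S := ⟨0, fun t ht => ht.1.1⟩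
  set c := sInf S with hc
  have hc0 : 0 ≤ c := le_csInf ⟨s, hsS⟩ fun t ht => ht.1.1
  have hcs : c ≤ s := csInf_le hSb hsS
  have hright : IntervalIntegrable g volume c s := by
    obtain ⟨w, -, hw, hwS⟩ := exists_seq_tendsto_sInf ⟨s, hsS⟩ hSb
    rw [intervalIntegrable_iff_integrableOn_Ioc_of_le hcs]
    refine integrableOn_Ioc_of_intervalIntegral_norm_bounded_left (I := C * M * s)
      (fun i => (intervalIntegrable_iff_integrableOn_Ioc_of_le (hwS i).1.2).1 (hwS i).2) hw ?_
    refine Filter.Eventually.of_forall fun i => ?_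
    obtain ⟨⟨hw0, hws⟩, hwi⟩ := hwS i
    rw [← intervalIntegral.integral_of_le hws]
    calc ∫ v in w i..s, ‖g v‖ ≤ ∫ v in w i..s, C * M := by
          apply intervalIntegral.integral_mono_on hws hwi.norm intervalIntegrable_const
          exact fun v hv => hgM v ⟨hw0.trans hv.1, hv.2⟩
      _ = C * M * (s - w i) := by simp; ring
      _ ≤ C * M * s := by gcongr; linarith
  have hleft : IntervalIntegrable g volume 0 c := by
    rw [intervalIntegrable_iff_integrableOn_Ioo_of_le hc0]
    have heq : ∀ t ∈ Ioo 0 c, g t = G t z := by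
      intro t ht
      have : ¬ IntervalIntegrable g volume t s := fun h =>
        notMem_of_lt_csInf ht.2 hSb ⟨⟨ht.1.le, ht.2.le.trans hcs⟩, h⟩
      have h1 := hx t ⟨ht.1.le, ht.2.le.trans hcs⟩
      rw [intervalIntegral.integral_undef this, sub_zero] at h1
      simp only [hg, h1]
    have : IntegrableOn (fun t => G t z) (Ioo 0 c) := by
      apply Measure.integrableOn_of_bounded (M := C * (1 + ‖z‖)) (by simp) hmeas
      exact Filter.Eventually.of_forall fun v => hG v z
    exact this.congr_fun (fun t ht => (heq t ht).symm) measurableSet_Ioo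
  exact hleft.trans hright

/-! ### Regularity of the drift and of its mollification -/

/-- The Hölder exponent of `F_i` in the variable `x_j` for `i ≤ j`: it is `β 0` for the first block
of the drift and `β j` for all the others. -/
def gam {n : ℕ} [NeZero n] (β : Fin n → ℝ) (i j : Fin n) : ℝ :=
  if (i : ℕ) = 0 then β 0 else β j

lemma rpow_le_one_add_s14 {a γ : ℝ} (ha : 0 ≤ a) (h0 : 0 ≤ γ) (h1 : γ ≤ 1) : a ^ γ ≤ 1 + a := by
  rcases le_total a 1 with h | h
  · have := rpow_le_one ha h h0
    linarith
  · have := rpow_le_rpow_of_exponent_le h h1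
    rw [rpow_one] at this
    linarith

lemma exists_rpow_le {T p q : ℝ} (hpq : q ≤ p) :
    ∃ C : ℝ, 0 ≤ C ∧ ∀ h, 0 < h → h ≤ T → h ^ p ≤ C * h ^ q := by
  refine ⟨(max 1 T) ^ (p - q), by positivity, fun h h0 hT => ?_⟩
  have : h ^ p = h ^ (p - q) * h ^ q := by rw [← rpow_add h0]; ring_nf
  rw [this]
  have h2 : h ≤ max 1 T := hT.trans (le_max_right _ _)
  have h3 : 0 ≤ p - q := by linarith
  gcongr

lemma gam_pos {n : ℕ} [NeZero n] {d : Fin n → ℕ} {α T K : ℝ}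
    {A : ℝ → E n d →L[ℝ] E n d} {F : ℝ → E n d → E n d} {β : Fin n → ℝ}
    (hc : ChainHyp n d α T K A F β) {i j : Fin n} (hij : i ≤ j) :
    0 < gam β i j ∧ gam β i j ≤ 1 := by
  unfold gam
  split_ifs with h
  · exact hc.hβ0
  · have hj : 1 ≤ (j : ℕ) := by
      have : (i : ℕ) ≤ j := hij
      omega
    obtain ⟨h1, h2⟩ := hc.hβ j hj
    refine ⟨lt_of_le_of_lt ?_ h1, h2⟩
    have := hc.hα₁
    have hj' : (1 : ℝ) ≤ ((j : ℕ) : ℝ) := by exact_mod_cast hj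
    have : 0 ≤ ((j : ℕ) : ℝ) - 1 := by linarith
    positivity

/-- Telescoping: an estimate for changes of one block at a time bounds any increment. -/
lemma norm_sub_le_sum_coord {n : ℕ} {d : Fin n → ℕ} {V : Type*} [NormedAddCommGroup V]
    {f : E n d → V} {x x' : E n d} {c : Fin n → ℝ}
    (hf : ∀ j (w w' : E n d), (∀ k, k ≠ j → w k = w' k) → w j = x j → w' j = x' j →
      ‖f w - f w'‖ ≤ c j) :
    ‖f x - f x'‖ ≤ ∑ j, c j := by
  -- Replace the blocks of `x` by those of `x'` one after the other.
  have key : ∀ s : Finset (Fin n), ‖f x - f (s.piecewise x' x)‖ ≤ ∑ j ∈ s, c j := by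
    intro s
    induction s using Finset.induction_on with
    | empty => simp
    | insert j s hj ih =>
      rw [Finset.sum_insert hj]
      have h1 : ‖f (s.piecewise x' x) - f ((insert j s).piecewise x' x)‖ ≤ c j := by
        apply hf j
        · intro k hk
          simp [Finset.piecewise, hk]
        · simp [Finset.piecewise, hj]
        · simp
      calc _ ≤ ‖f x - f (s.piecewise x' x)‖ +
            ‖f (s.piecewise x' x) - f ((insert j s).piecewise x' x)‖ := norm_sub_le_norm_sub_add_norm_sub _ _ _
        _ ≤ _ := by linarith
  have := key Finset.univ
  simpa using this

lemma holder_F {n : ℕ} [NeZero n] {d : Fin n → ℕ} {α T K : ℝ}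
    {A : ℝ → E n d →L[ℝ] E n d} {F : ℝ → E n d → E n d} {β : Fin n → ℝ}
    (hc : ChainHyp n d α T K A F β) :
    ∃ CH : ℝ, 0 < CH ∧ ∀ i t x x', ‖F t x i - F t x' i‖ ≤
      CH * ∑ j, if i ≤ j then ‖x j - x' j‖ ^ gam β i j else 0 := by
  obtain ⟨CH, hCH, h0, h1⟩ := hc.hHolder
  refine ⟨CH, hCH, fun i t x x' => ?_⟩
  rw [Finset.mul_sum]
  apply norm_sub_le_sum_coord (f := fun w => F t w i)
  intro j w w' hw hwj hwj'
  split_ifs with hij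
  · rw [← hwj, ← hwj']
    by_cases hi : (i : ℕ) = 0
    · have hi0 : i = 0 := Fin.ext (by simpa using hi)
      subst hi0
      simpa [gam] using h0 j t w w' hw
    · simpa [gam, hi] using h1 i j (by omega) hij t w w' hw
  · have : F t w i = F t w' i := hc.hFdep i t w w' fun k hk => hw k fun h => hij (h ▸ hk)
    simp [this]

lemma F_growth {n : ℕ} [NeZero n] {d : Fin n → ℕ} {α T K : ℝ}
    {A : ℝ → E n d →L[ℝ] E n d} {F : ℝ → E n d → E n d} {β : Fin n → ℝ}
    (hc : ChainHyp n d α T K A F β) :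
    ∃ C : ℝ, 0 < C ∧ ∀ t x, ‖F t x‖ ≤ C * (1 + ‖x‖) := by
  obtain ⟨CH, hCH, hF⟩ := holder_F hc
  have hK := hc.hK
  refine ⟨K + CH * n, by positivity, fun t x => ?_⟩
  rw [pi_norm_le_iff_of_nonneg (by positivity)]
  intro i
  have h1 := hF i t x 0
  have h2 : ∑ j, (if i ≤ j then ‖x j - (0 : E n d) j‖ ^ gam β i j else 0) ≤
      ∑ _j : Fin n, (1 + ‖x‖) := by
    apply Finset.sum_le_sum
    intro j _
    split_ifs with hij
    · obtain ⟨g0, g1⟩ := gam_pos hc hij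
      refine (rpow_le_one_add_s14 (norm_nonneg _) g0.le g1).trans ?_
      have := norm_le_pi_norm x j
      simpa using this
    · positivity
  simp only [Finset.sum_const, Finset.card_univ, Fintype.card_fin, nsmul_eq_mul] at h2
  have h3 : ‖F t x i‖ ≤ ‖F t x i - F t 0 i‖ + ‖F t 0 i‖ := norm_le_norm_sub_add _ _
  have h4 := hc.hF0 t i
  have h5 : CH * ∑ j, (if i ≤ j then ‖x j - (0 : E n d) j‖ ^ gam β i j else 0) ≤
    CH * (n * (1 + ‖x‖)) := by gcongr
  have h6 : 0 ≤ K * ‖x‖ := by positivity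
  nlinarith

lemma exists_mollifier_radius {n : ℕ} {d : Fin n → ℕ} {ρ : Fin n → E n d → ℝ}
    (hρ : IsMollifier ρ) : ∃ R : ℝ, 0 ≤ R ∧ ∀ i ω, R < ‖ω‖ → ρ i ω = 0 := by
  have : ∀ i, ∃ R : ℝ, ∀ ω, R < ‖ω‖ → ρ i ω = 0 := by
    intro i
    obtain ⟨R, hR⟩ := (hρ i).2.1.isCompact.isBounded.exists_norm_le
    refine ⟨R, fun ω hω => ?_⟩
    by_contra h
    exact absurd (hR ω (subset_tsupport _ h)) (not_le.2 hω)
  choose R hR using this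
  refine ⟨∑ i, |R i|, by positivity, fun i ω hω => hR i ω (lt_of_le_of_lt ?_ hω)⟩
  exact (le_abs_self _).trans
    (Finset.single_le_sum (f := fun i => |R i|) (fun _ _ => abs_nonneg _) (Finset.mem_univ i))

/-- Averaging against the probability density `ρ i`, supported in the ball of radius `R`. -/
lemma molF_sub_le {n : ℕ} {d : Fin n → ℕ} {F : ℝ → E n d → E n d}
    (hF : Measurable fun p : ℝ × E n d => F p.1 p.2)
    {ρ : Fin n → E n d → ℝ} (hρ : IsMollifier ρ) {R : ℝ} (hR : ∀ i ω, R < ‖ω‖ → ρ i ω = 0)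
    (δ : Fin n → Fin n → ℝ) (t : ℝ) (z : E n d) (i : Fin n) {D : ℝ}
    (hD : ∀ ω : E n d, ‖ω‖ ≤ R → ‖F t (fun j => z j - δ i j • ω j) i - F t z i‖ ≤ D) :
    ‖molF ρ δ F t z i - F t z i‖ ≤ D := by
  obtain ⟨hsm, hcs, hpos, hone⟩ := hρ i
  have hint : Integrable (ρ i) := hsm.continuous.integrable_of_hasCompactSupport hcs
  have hbd : ∀ ω, ‖ρ i ω • (F t (fun j => z j - δ i j • ω j) i - F t z i)‖ ≤ ρ i ω * D := by
    intro ω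
    rw [norm_smul, Real.norm_of_nonneg (hpos ω)]
    by_cases h : ‖ω‖ ≤ R
    · exact mul_le_mul_of_nonneg_left (hD ω h) (hpos ω)
    · rw [hR i ω (not_le.1 h)]
      simp
  have hmeas : Measurable fun ω : E n d => F t (fun j => z j - δ i j • ω j) i := by
    have h1 : Measurable fun ω : E n d => ((t, fun j => z j - δ i j • ω j) : ℝ × E n d) := by
      fun_prop
    exact (measurable_pi_apply i).comp (hF.comp h1)
  have hint2 : Integrable fun ω => ρ i ω • (F t (fun j => z j - δ i j • ω j) i - F t z i) := by
    refine (hint.mul_const D).mono' ?_ (Filter.Eventually.of_forall hbd)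
    exact (hsm.continuous.measurable.smul (hmeas.sub_const _)).aestronglyMeasurable
  have hint3 : Integrable fun ω => ρ i ω • F t z i := hint.smul_const _
  have heq : molF ρ δ F t z i - F t z i =
      ∫ ω, ρ i ω • (F t (fun j => z j - δ i j • ω j) i - F t z i) := by
    have h1 : molF ρ δ F t z i = ∫ ω, (ρ i ω • (F t (fun j => z j - δ i j • ω j) i - F t z i) +
        ρ i ω • F t z i) := by
      unfold molF
      congr 1
      ext1 ω
      rw [smul_sub, sub_add_cancel]
    rw [h1, integral_add hint2 hint3, integral_smul_const, hone, one_smul, add_sub_cancel_right]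
  rw [heq]
  calc _ ≤ ∫ ω, ρ i ω * D := norm_integral_le_of_norm_le (hint.mul_const D)
        (Filter.Eventually.of_forall hbd)
    _ = D := by rw [integral_mul_const, hone, one_mul]

lemma molF_measurable {n : ℕ} {d : Fin n → ℕ} {F : ℝ → E n d → E n d}
    (hF : Measurable fun p : ℝ × E n d => F p.1 p.2)
    {ρ : Fin n → E n d → ℝ} (hρ : IsMollifier ρ) (δ : Fin n → Fin n → ℝ) (z : E n d) :
    Measurable fun t => molF ρ δ F t z := by
  refine measurable_pi_iff.2 fun i => ?_
  have h1 : Measurable fun p : ℝ × E n d =>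
      ((p.1, fun j => z j - δ i j • p.2 j) : ℝ × E n d) := by
    fun_prop
  have h2 : Measurable fun p : ℝ × E n d =>
      ρ i p.2 • F p.1 (fun j => z j - δ i j • p.2 j) i :=
    ((hρ i).1.continuous.measurable.comp measurable_snd).smul
      ((measurable_pi_apply i).comp (hF.comp h1))
  exact (h2.stronglyMeasurable.integral_prod_right (ν := volume)).measurable

/-- The mollification error is controlled by the mollification scales raised to the Hölder
exponents. -/
lemma molF_sub_le_scales {n : ℕ} [NeZero n] {d : Fin n → ℕ} {α T K : ℝ}
    {A : ℝ → E n d →L[ℝ] E n d} {F : ℝ → E n d → E n d} {β : Fin n → ℝ}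
    (hc : ChainHyp n d α T K A F β) {ρ : Fin n → E n d → ℝ} (hρ : IsMollifier ρ) :
    ∃ C R : ℝ, 0 < C ∧ 0 ≤ R ∧ ∀ (δ : Fin n → Fin n → ℝ) t z i,
      ‖molF ρ δ F t z i - F t z i‖ ≤
        C * ∑ j, if i ≤ j then (|δ i j| * R) ^ gam β i j else 0 := by
  obtain ⟨CH, hCH, hF⟩ := holder_F hc
  obtain ⟨R, hR0, hR⟩ := exists_mollifier_radius hρ
  refine ⟨CH, R, hCH, hR0, fun δ t z i => molF_sub_le hc.hFmeas hρ hR δ t z i fun ω hω => ?_⟩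
  refine (hF i t _ z).trans ?_
  gcongr with j hj
  split_ifs with hij
  · refine rpow_le_rpow (norm_nonneg _) ?_ (gam_pos hc hij).1.le
    have : ‖ω j‖ ≤ R := (norm_le_pi_norm ω j).trans hω
    simp only [sub_sub_cancel_left, norm_neg, norm_smul, Real.norm_eq_abs]
    gcongr
  · exact le_rfl

/-- The constant depends on the scales `δ`; this bound only serves to establish integrability. -/
lemma molF_growth {n : ℕ} [NeZero n] {d : Fin n → ℕ} {α T K : ℝ}
    {A : ℝ → E n d →L[ℝ] E n d} {F : ℝ → E n d → E n d} {β : Fin n → ℝ}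
    (hc : ChainHyp n d α T K A F β) {ρ : Fin n → E n d → ℝ} (hρ : IsMollifier ρ)
    (δ : Fin n → Fin n → ℝ) :
    ∃ C : ℝ, 0 < C ∧ ∀ t x, ‖molF ρ δ F t x‖ ≤ C * (1 + ‖x‖) := by
  obtain ⟨C1, hC1, hF⟩ := F_growth hc
  obtain ⟨C2, R, hC2, hR, hm⟩ := molF_sub_le_scales hc hρ
  set D : Fin n → ℝ := fun i => C2 * ∑ j, if i ≤ j then (|δ i j| * R) ^ gam β i j else 0 with hD
  have hDn : ∀ i, 0 ≤ D i := by
    intro i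
    refine mul_nonneg hC2.le (Finset.sum_nonneg fun j _ => ?_)
    split_ifs <;> positivity
  have hS : 0 ≤ ∑ i, D i := Finset.sum_nonneg fun i _ => hDn i
  refine ⟨C1 + ∑ i, D i, by positivity, fun t x => ?_⟩
  rw [pi_norm_le_iff_of_nonneg (by positivity)]
  intro i
  have h1 := hm δ t x i
  have h2 : D i ≤ ∑ i, D i := Finset.single_le_sum (fun i _ => hDn i) (Finset.mem_univ i)
  have h3 := (norm_le_pi_norm (F t x) i).trans (hF t x)
  have h4 : ‖molF ρ δ F t x i‖ ≤ ‖molF ρ δ F t x i - F t x i‖ + ‖F t x i‖ :=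
    norm_le_norm_sub_add _ _
  have h5 : 0 ≤ (∑ i, D i) * ‖x‖ := by positivity
  have h6 : ‖molF ρ δ F t x i - F t x i‖ ≤ D i := h1
  nlinarith

/-! ### The drift difference in the intrinsic scale -/

lemma norm_coord_le_Tinv {n : ℕ} {d : Fin n → ℕ} {α h : ℝ} (hh : 0 < h) (x : E n d) (j : Fin n) :
    ‖x j‖ ≤ h ^ (1 / α + ((j : ℕ) : ℝ)) * ‖Tinv α h x‖ := by
  have h1 := norm_le_pi_norm (Tinv α h x) j
  have h2 : 0 < h ^ (1 / α + ((j : ℕ) : ℝ)) := rpow_pos_of_pos hh _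
  rw [Tinv, norm_smul, norm_inv, Real.norm_of_nonneg h2.le, inv_mul_le_iff₀ h2] at h1
  exact h1

/-- Block `i` of `A t e` only sees the blocks `j ≥ i - 1` of `e`. -/
lemma A_apply_le {n : ℕ} [NeZero n] {d : Fin n → ℕ} {α T K : ℝ}
    {A : ℝ → E n d →L[ℝ] E n d} {F : ℝ → E n d → E n d} {β : Fin n → ℝ}
    (hc : ChainHyp n d α T K A F β) {CA : ℝ} (hA : ∀ t, ‖A t‖ ≤ CA) (t : ℝ) (e : E n d)
    (i : Fin n) :
    ‖A t e i‖ ≤ CA * ∑ j : Fin n, if (i : ℕ) ≤ (j : ℕ) + 1 then ‖e j‖ else 0 := by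
  have h1 : A t e i = ∑ j, A t (Pi.single j (e j)) i := by
    conv_lhs => rw [← Finset.univ_sum_single e]
    rw [map_sum, Finset.sum_apply]
  rw [h1, Finset.mul_sum]
  refine norm_sum_le_of_le _ fun j _ => ?_
  split_ifs with hij
  · calc ‖A t (Pi.single j (e j)) i‖ ≤ ‖A t (Pi.single j (e j))‖ := norm_le_pi_norm _ i
      _ ≤ ‖A t‖ * ‖(Pi.single j (e j) : E n d)‖ := (A t).le_opNorm _
      _ ≤ CA * ‖e j‖ := by
        rw [Pi.norm_single]
        gcongr
        exact hA t
  · rw [hc.hAblock t i j _ (by omega)]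
    simp

lemma term_A {n : ℕ} {d : Fin n → ℕ} {α T : ℝ} (i j : Fin n) (hij : (i : ℕ) ≤ (j : ℕ) + 1) :
    ∃ C : ℝ, 0 ≤ C ∧ ∀ h, 0 < h → h ≤ T → ∀ e : E n d,
      ‖e j‖ ≤ C * h ^ (1 / α + ((i : ℕ) : ℝ) - 1) * (1 + ‖Tinv α h e‖) := by
  have hij' : ((i : ℕ) : ℝ) ≤ ((j : ℕ) : ℝ) + 1 := by exact_mod_cast hij
  obtain ⟨C, hC, hp⟩ := exists_rpow_le (T := T) (p := 1 / α + ((j : ℕ) : ℝ))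
    (q := 1 / α + ((i : ℕ) : ℝ) - 1) (by linarith)
  refine ⟨C, hC, fun h h0 hT e => ?_⟩
  refine (norm_coord_le_Tinv (α := α) h0 e j).trans ?_
  have := hp h h0 hT
  gcongr
  linarith

/-- The scaling condition behind the thresholds on the Hölder exponents: for `i ≥ 1` it is the lower
bound imposed on `β j`, for `i = 0` it holds because `1 / α ≤ 1`. -/
lemma term_holder_exponent {n : ℕ} [NeZero n] {d : Fin n → ℕ} {α T K : ℝ}
    {A : ℝ → E n d →L[ℝ] E n d} {F : ℝ → E n d → E n d} {β : Fin n → ℝ}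
    (hc : ChainHyp n d α T K A F β) {i j : Fin n} (hij : i ≤ j) :
    1 / α + ((i : ℕ) : ℝ) - 1 ≤ (1 / α + ((j : ℕ) : ℝ)) * gam β i j := by
  have hα := hc.hα₁
  have hα0 : 0 < α := by linarith
  have hij' : ((i : ℕ) : ℝ) ≤ ((j : ℕ) : ℝ) := by exact_mod_cast hij
  by_cases hi : (i : ℕ) = 0
  · have h1 : 1 / α ≤ 1 := by rw [div_le_one hα0]; exact hα.le
    have h2 := (gam_pos hc hij).1
    have h3 : 0 ≤ (1 / α + ((j : ℕ) : ℝ)) * gam β i j := by positivity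
    rw [hi]
    push_cast
    linarith
  · have hj : 1 ≤ (j : ℕ) := by
      have : (i : ℕ) ≤ j := hij
      omega
    have h1 := (hc.hβ j hj).1
    have h2 : gam β i j = β j := by simp [gam, hi]
    rw [h2]
    rw [div_lt_iff₀ (by positivity)] at h1
    have h3 : (1 / α + ((j : ℕ) : ℝ)) * β j = (β j * (1 + α * ((j : ℕ) : ℝ))) / α := by
      field_simp
    have h4 : 1 / α + ((j : ℕ) : ℝ) - 1 = (1 + α * (((j : ℕ) : ℝ) - 1)) / α := by
      field_simp
      ring
    calc _ ≤ 1 / α + ((j : ℕ) : ℝ) - 1 := by linarith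
      _ ≤ _ := by rw [h3, h4]; gcongr

lemma term_F {n : ℕ} [NeZero n] {d : Fin n → ℕ} {α T K : ℝ}
    {A : ℝ → E n d →L[ℝ] E n d} {F : ℝ → E n d → E n d} {β : Fin n → ℝ}
    (hc : ChainHyp n d α T K A F β) (i j : Fin n) (hij : i ≤ j) :
    ∃ C : ℝ, 0 ≤ C ∧ ∀ h, 0 < h → h ≤ T → ∀ e : E n d,
      ‖e j‖ ^ gam β i j ≤ C * h ^ (1 / α + ((i : ℕ) : ℝ) - 1) * (1 + ‖Tinv α h e‖) := by
  obtain ⟨g0, g1⟩ := gam_pos hc hij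
  obtain ⟨C, hC, hp⟩ := exists_rpow_le (T := T) (term_holder_exponent hc hij)
  refine ⟨C, hC, fun h h0 hT e => ?_⟩
  have h1 := rpow_le_rpow (norm_nonneg _) (norm_coord_le_Tinv (α := α) h0 e j) g0.le
  rw [mul_rpow (by positivity) (norm_nonneg _), ← rpow_mul h0.le] at h1
  refine h1.trans ?_
  have := hp h h0 hT
  have := rpow_le_one_add_s14 (norm_nonneg (Tinv α h e)) g0.le g1
  gcongr

/-- The scale `δ_{ij}`, `i ≥ 1`, is chosen so that `δ_{ij} ^ β_j` is a multiple of
`h ^ (1 / α + j - 1)`. -/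
lemma term_mol {n : ℕ} [NeZero n] {d : Fin n → ℕ} {α T K : ℝ}
    {A : ℝ → E n d →L[ℝ] E n d} {F : ℝ → E n d → E n d} {β : Fin n → ℝ}
    (hc : ChainHyp n d α T K A F β) (Cbar C₁ : ℝ) {R : ℝ} (hR : 0 ≤ R) (i j : Fin n)
    (hij : i ≤ j) :
    ∃ C : ℝ, 0 ≤ C ∧ ∀ h, 0 < h → h ≤ T →
      (|if (i : ℕ) = 0 then C₁ else
          Cbar * h ^ ((1 + α * (((j : ℕ) : ℝ) - 1)) / (α * β j))| * R) ^ gam β i j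
        ≤ C * h ^ (1 / α + ((i : ℕ) : ℝ) - 1) := by
  have hα := hc.hα₁
  have hα0 : 0 < α := by linarith
  have hij' : ((i : ℕ) : ℝ) ≤ ((j : ℕ) : ℝ) := by exact_mod_cast hij
  have hg := gam_pos hc hij
  by_cases hi : (i : ℕ) = 0
  · have h1 : 1 / α ≤ 1 := by rw [div_le_one hα0]; exact hα.le
    obtain ⟨C, hC, hp⟩ := exists_rpow_le (T := T) (p := 0)
      (q := 1 / α + ((i : ℕ) : ℝ) - 1) (by rw [hi]; push_cast; linarith)
    refine ⟨(|C₁| * R) ^ gam β i j * C, by positivity, fun h h0 hT => ?_⟩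
    have := hp h h0 hT
    rw [rpow_zero] at this
    simp only [hi, if_true] at this ⊢
    rw [mul_assoc]
    exact le_mul_of_one_le_right (by positivity) this
  · obtain ⟨C, hC, hp⟩ := exists_rpow_le (T := T) (p := 1 / α + ((j : ℕ) : ℝ) - 1)
      (q := 1 / α + ((i : ℕ) : ℝ) - 1) (by linarith)
    refine ⟨(|Cbar| * R) ^ gam β i j * C, by positivity, fun h h0 hT => ?_⟩
    have h2 : gam β i j = β j := by simp [gam, hi]
    have hβ : β j ≠ 0 := by rw [← h2]; exact hg.1.ne'
    simp only [hi, if_false]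
    rw [abs_mul, abs_of_pos (rpow_pos_of_pos h0 _), mul_right_comm,
      mul_rpow (by positivity) (by positivity), ← rpow_mul h0.le, mul_assoc]
    have h3 : (1 + α * (((j : ℕ) : ℝ) - 1)) / (α * β j) * gam β i j =
        1 / α + ((j : ℕ) : ℝ) - 1 := by
      rw [h2]
      field_simp
      ring
    rw [h3]
    gcongr
    exact hp h h0 hT

/-- The key estimate: in each block the two drifts differ by at most `h⁻¹` times the intrinsic scale
`h ^ (1 / α + i)` of the block, up to the factor `1 + ‖𝕋_h⁻¹ (x - x')‖`, which is linear in the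
rescaled distance. -/
lemma drift_diff_le {n : ℕ} [NeZero n] {d : Fin n → ℕ} {α T K : ℝ}
    {A : ℝ → E n d →L[ℝ] E n d} {F : ℝ → E n d → E n d} {β : Fin n → ℝ}
    (hc : ChainHyp n d α T K A F β) {ρ : Fin n → E n d → ℝ} (hρ : IsMollifier ρ)
    (Cbar C₁ : ℝ) :
    ∃ C : ℝ, 0 < C ∧ ∀ h, 0 < h → h ≤ T → ∀ δ : Fin n → Fin n → ℝ,
      (δ = fun (i j : Fin n) => if (i : ℕ) = 0 then C₁ else
        Cbar * h ^ ((1 + α * (((j : ℕ) : ℝ) - 1)) / (α * β j))) →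
      ∀ (u : ℝ) (x x' : E n d) (i : Fin n),
        ‖((A u x + F u x) - (A u x' + molF ρ δ F u x')) i‖ ≤
          C * h ^ (1 / α + ((i : ℕ) : ℝ) - 1) * (1 + ‖Tinv α h (x - x')‖) := by
  obtain ⟨CA, hA⟩ := hc.hAbdd
  have hCA : 0 ≤ CA := (norm_nonneg _).trans (hA 0)
  obtain ⟨CH, hCH, hF⟩ := holder_F hc
  obtain ⟨CM, R, hCM, hR, hM⟩ := molF_sub_le_scales hc hρ
  have key : ∀ i j : Fin n, ∃ C : ℝ, 0 ≤ C ∧ ∀ h, 0 < h → h ≤ T → ∀ e : E n d,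
      CA * (if (i : ℕ) ≤ (j : ℕ) + 1 then ‖e j‖ else 0) +
      CH * (if i ≤ j then ‖e j‖ ^ gam β i j else 0) +
      CM * (if i ≤ j then (|if (i : ℕ) = 0 then C₁ else
        Cbar * h ^ ((1 + α * (((j : ℕ) : ℝ) - 1)) / (α * β j))| * R) ^ gam β i j else 0) ≤
      C * (h ^ (1 / α + ((i : ℕ) : ℝ) - 1) * (1 + ‖Tinv α h e‖)) := by
    intro i j
    have a1 : ∃ C : ℝ, 0 ≤ C ∧ ∀ h, 0 < h → h ≤ T → ∀ e : E n d,
        (if (i : ℕ) ≤ (j : ℕ) + 1 then ‖e j‖ else 0) ≤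
        C * h ^ (1 / α + ((i : ℕ) : ℝ) - 1) * (1 + ‖Tinv α h e‖) := by
      split_ifs with hij
      · exact term_A i j hij
      · exact ⟨0, le_rfl, fun h _ _ e => by simp⟩
    have a2 : ∃ C : ℝ, 0 ≤ C ∧ ∀ h, 0 < h → h ≤ T → ∀ e : E n d,
        (if i ≤ j then ‖e j‖ ^ gam β i j else 0) ≤
        C * h ^ (1 / α + ((i : ℕ) : ℝ) - 1) * (1 + ‖Tinv α h e‖) := by
      split_ifs with hij
      · exact term_F hc i j hij
      · exact ⟨0, le_rfl, fun h _ _ e => by simp⟩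
    have a3 : ∃ C : ℝ, 0 ≤ C ∧ ∀ h, 0 < h → h ≤ T →
        (if i ≤ j then (|if (i : ℕ) = 0 then C₁ else
        Cbar * h ^ ((1 + α * (((j : ℕ) : ℝ) - 1)) / (α * β j))| * R) ^ gam β i j else 0) ≤
        C * h ^ (1 / α + ((i : ℕ) : ℝ) - 1) := by
      by_cases hij : i ≤ j
      · simp only [if_pos hij]
        exact term_mol hc Cbar C₁ hR i j hij
      · exact ⟨0, le_rfl, fun h _ _ => by simp [hij]⟩
    obtain ⟨c1, hc1, b1⟩ := a1
    obtain ⟨c2, hc2, b2⟩ := a2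
    obtain ⟨c3, hc3, b3⟩ := a3
    refine ⟨CA * c1 + CH * c2 + CM * c3, by positivity, fun h h0 hT e => ?_⟩
    have e1 := mul_le_mul_of_nonneg_left (b1 h h0 hT e) hCA
    have e2 := mul_le_mul_of_nonneg_left (b2 h h0 hT e) hCH.le
    have e3 := mul_le_mul_of_nonneg_left (b3 h h0 hT) hCM.le
    have e4 : 0 ≤ CM * (c3 * h ^ (1 / α + ((i : ℕ) : ℝ) - 1)) * ‖Tinv α h e‖ := by positivity
    linarith
  choose c hc0 hb using key
  have hS : 0 ≤ ∑ i, ∑ j, c i j :=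
    Finset.sum_nonneg fun i _ => Finset.sum_nonneg fun j _ => hc0 i j
  refine ⟨1 + ∑ i, ∑ j, c i j, by positivity, ?_⟩
  intro h h0 hT δ hδ u x x' i
  have hsplit : ((A u x + F u x) - (A u x' + molF ρ δ F u x')) i =
      A u (x - x') i + (F u x i - F u x' i) - (molF ρ δ F u x' i - F u x' i) := by
    simp only [Pi.add_apply, Pi.sub_apply, map_sub]
    abel
  rw [hsplit]
  have h1 := A_apply_le hc hA u (x - x') i
  have h2 := hF i u x x'
  have h3 := hM δ u x' i
  have h4 : ‖A u (x - x') i + (F u x i - F u x' i) - (molF ρ δ F u x' i - F u x' i)‖ ≤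
      ‖A u (x - x') i‖ + ‖F u x i - F u x' i‖ + ‖molF ρ δ F u x' i - F u x' i‖ :=
    (norm_sub_le _ _).trans (by gcongr; exact norm_add_le _ _)
  have h5 : ∑ j, c i j ≤ ∑ i, ∑ j, c i j :=
    Finset.single_le_sum (f := fun i => ∑ j, c i j)
      (fun i _ => Finset.sum_nonneg fun j _ => hc0 i j) (Finset.mem_univ i)
  have h6 := Finset.sum_le_sum fun j (_ : j ∈ Finset.univ) => hb i j h h0 hT (x - x')
  rw [Finset.sum_add_distrib, Finset.sum_add_distrib, ← Finset.mul_sum, ← Finset.mul_sum,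
    ← Finset.mul_sum, ← Finset.sum_mul] at h6
  subst hδ
  have hQ : 0 ≤ h ^ (1 / α + ((i : ℕ) : ℝ) - 1) * (1 + ‖Tinv α h (x - x')‖) := by positivity
  calc _ ≤ _ := h4
    _ ≤ _ := add_le_add (add_le_add h1 h2) h3
    _ ≤ _ := h6
    _ ≤ (1 + ∑ i, ∑ j, c i j) * (h ^ (1 / α + ((i : ℕ) : ℝ) - 1) *
        (1 + ‖Tinv α h (x - x')‖)) := by gcongr; linarith
    _ = _ := by ring

/-! ### Rescaled distance of the two flows -/

/-- Grönwall's inequality for the rescaled distance: its rate `C / h` on an interval of length `h`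
gives a bound depending on `C` alone. -/
lemma rescaled_bound {n : ℕ} {d : Fin n → ℕ} {α t s C : ℝ} (hC : 0 < C) (hts : t < s)
    {x x' g g' : ℝ → E n d} {z : E n d}
    (hg : IntervalIntegrable g volume t s) (hg' : IntervalIntegrable g' volume t s)
    (hx : ∀ u ∈ Icc t s, x u = z - ∫ v in u..s, g v)
    (hx' : ∀ u ∈ Icc t s, x' u = z - ∫ v in u..s, g' v)
    (hgg : ∀ v i, ‖(g v - g' v) i‖ ≤
      C * (s - t) ^ (1 / α + ((i : ℕ) : ℝ) - 1) * (1 + ‖Tinv α (s - t) (x v - x' v)‖)) :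
    ‖Tinv α (s - t) (x t - x' t)‖ ≤ 2 * exp (2 * C) := by
  set h := s - t with hh
  have h0 : 0 < h := by rw [hh]; linarith
  have hxc := continuousOn_of_integral_eq hts.le hg hx
  have hxc' := continuousOn_of_integral_eq hts.le hg' hx'
  have hTc : Continuous fun y : E n d => Tinv α h y := by
    unfold Tinv
    fun_prop
  have hψc : ContinuousOn (fun u => 1 + ‖Tinv α h (x u - x' u)‖) (Icc t s) :=
    continuousOn_const.add (hTc.comp_continuousOn (hxc.sub hxc')).norm
  have hψ : ∀ u ∈ Icc t s, 1 + ‖Tinv α h (x u - x' u)‖ ≤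
      1 + C / h * ∫ v in u..s, (1 + ‖Tinv α h (x v - x' v)‖) := by
    intro u hu
    have hψi : IntervalIntegrable (fun v => 1 + ‖Tinv α h (x v - x' v)‖) volume u s := by
      apply ContinuousOn.intervalIntegrable
      rw [uIcc_of_le hu.2]
      exact hψc.mono (Icc_subset_Icc_left hu.1)
    have hI : 0 ≤ ∫ v in u..s, (1 + ‖Tinv α h (x v - x' v)‖) :=
      intervalIntegral.integral_nonneg hu.2 fun v _ => by positivity
    gcongr
    rw [pi_norm_le_iff_of_nonneg (by positivity)]
    intro i
    have hsub : uIcc u s ⊆ uIcc t s := by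
      rw [uIcc_of_le hu.2, uIcc_of_le hts.le]
      exact Icc_subset_Icc_left hu.1
    have hgu := hg.mono_set hsub
    have hgu' := hg'.mono_set hsub
    have hdiff : x u - x' u = -∫ v in u..s, (g v - g' v) := by
      rw [hx u hu, hx' u hu, intervalIntegral.integral_sub hgu hgu']
      abel
    have hcoord : (x u - x' u) i = -∫ v in u..s, (g v - g' v) i := by
      rw [hdiff, Pi.neg_apply]
      congr 1
      exact ((ContinuousLinearMap.proj (R := ℝ) (φ := fun i : Fin n => Fin (d i) → ℝ)
        i).intervalIntegral_comp_comm (hgu.sub hgu')).symm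
    have hle : ‖(x u - x' u) i‖ ≤ C * h ^ (1 / α + ((i : ℕ) : ℝ) - 1) *
        ∫ v in u..s, (1 + ‖Tinv α h (x v - x' v)‖) := by
      rw [hcoord, norm_neg, ← intervalIntegral.integral_const_mul]
      exact intervalIntegral.norm_integral_le_of_norm_le hu.2
        (Filter.Eventually.of_forall fun v _ => hgg v i) (hψi.const_mul _)
    have hp : 0 < h ^ (1 / α + ((i : ℕ) : ℝ)) := rpow_pos_of_pos h0 _
    rw [Tinv, norm_smul, norm_inv, Real.norm_of_nonneg hp.le, inv_mul_le_iff₀ hp]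
    refine hle.trans (le_of_eq ?_)
    rw [rpow_sub_one h0.ne']
    ring
  have := backward_gronwall (P := 1) (div_pos hC h0) zero_le_one hψc hψ t ⟨le_rfl, hts.le⟩
  have hexp : 2 * (C / h) * (s - t) = 2 * C := by
    rw [← hh]
    field_simp
  rw [hexp] at this
  linarith

/-- Eq. (SENSI_DELTA_THETA).  With the mollification scales
`δ_{1j} = C₁` and `δ_{ij} = C̄ (s−t)^{(1+α(j−2))/(αβ^j)}` for `2 ≤ i ≤ j ≤ n` (0-indexed
below), `C̄, C₁` large enough, the backward flow `θ^δ` of the mollified system stays at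
rescaled distance at most `C₀` from the flow `θ` of `(A,F)`:
`|𝕋_{s−t}⁻¹(θ_{t,s}(y) − θ^δ_{t,s}(y))| ≤ C₀` uniformly in `t, s, y, δ`. -/
theorem stmt14 {n : ℕ} [NeZero n] {d : Fin n → ℕ} {α T K : ℝ}
    {A : ℝ → E n d →L[ℝ] E n d} {F : ℝ → E n d → E n d} {β : Fin n → ℝ}
    (hc : ChainHyp n d α T K A F β)
    (ρ : Fin n → E n d → ℝ) (hρ : IsMollifier ρ)
    (θ : ℝ → ℝ → E n d → E n d) (hθ : IsFlow T A F θ) :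
    ∃ Cbar₀ C₁₀ : ℝ, ∀ Cbar C₁ : ℝ, Cbar₀ ≤ Cbar → C₁₀ ≤ C₁ →
      ∃ C₀ : ℝ, 0 < C₀ ∧
        ∀ t s : ℝ, 0 ≤ t → t < s → s ≤ T →
        ∀ δ : Fin n → Fin n → ℝ,
          (δ = fun (i j : Fin n) => if (i : ℕ) = 0 then C₁ else
            Cbar * (s - t) ^ ((1 + α * (((j : ℕ) : ℝ) - 1)) / (α * β j))) →
        ∀ θδ : ℝ → E n d → E n d,
          (∀ t' : ℝ, 0 ≤ t' → t' ≤ s → ∀ z : E n d,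
            θδ t' z = z - ∫ u in t'..s, (A u (θδ u z) + molF ρ δ F u (θδ u z))) →
        ∀ y : E n d, ‖Tinv α (s - t) (θ t s y - θδ t y)‖ ≤ C₀ := by
  -- No lower bound on `Cbar` and `C₁` is needed, as `C₀` may depend on both.
  refine ⟨0, 0, fun Cbar C₁ _ _ => ?_⟩
  obtain ⟨C, hC, hdrift⟩ := drift_diff_le hc hρ Cbar C₁
  refine ⟨2 * exp (2 * C), by positivity, fun t s ht hts hsT δ hδ θδ hθδ y => ?_⟩
  have hs : 0 ≤ s := ht.trans hts.le
  obtain ⟨CA, hA⟩ := hc.hAbdd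
  have hCA : 0 ≤ CA := (norm_nonneg _).trans (hA 0)
  obtain ⟨CF, hCF, hF⟩ := F_growth hc
  obtain ⟨CM, hCM, hM⟩ := molF_growth hc hρ δ
  have hAx : ∀ u (x : E n d), ‖A u x‖ ≤ CA * (1 + ‖x‖) := fun u x =>
    ((A u).le_of_opNorm_le (hA u) x).trans (by gcongr; linarith)
  have hx : ∀ u ∈ Icc 0 s,
      θ u s y = y - ∫ v in u..s, (A v (θ v s y) + F v (θ v s y)) := fun u hu =>
    hθ.2 u s ⟨hu.1, hu.2.trans hsT⟩ ⟨hs, hsT⟩ y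
  have hx' : ∀ u ∈ Icc 0 s,
      θδ u y = y - ∫ v in u..s, (A v (θδ v y) + molF ρ δ F v (θδ v y)) := fun u hu =>
    hθδ u hu.1 hu.2 y
  have hm : AEStronglyMeasurable (fun u => A u y + F u y) volume := by
    have h1 : Measurable fun u => F u y := hc.hFmeas.comp measurable_prodMk_right
    exact ((hc.hAmeas y).add h1).aestronglyMeasurable
  have hm' : AEStronglyMeasurable (fun u => A u y + molF ρ δ F u y) volume :=
    ((hc.hAmeas y).add (molF_measurable hc.hFmeas hρ δ y)).aestronglyMeasurable
  have hG : ∀ u (x : E n d), ‖A u x + F u x‖ ≤ (CA + CF) * (1 + ‖x‖) := fun u x =>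
    (norm_add_le _ _).trans (by linarith [hAx u x, hF u x])
  have hG' : ∀ u (x : E n d), ‖A u x + molF ρ δ F u x‖ ≤ (CA + CM) * (1 + ‖x‖) := fun u x =>
    (norm_add_le _ _).trans (by linarith [hAx u x, hM u x])
  have hg : IntervalIntegrable (fun v => A v (θ v s y) + F v (θ v s y)) volume 0 s :=
    flow_intervalIntegrable_s14 (G := fun u x => A u x + F u x) (C := CA + CF)
      (x := fun u => θ u s y) hs (by positivity) hG hm hx
  have hg' : IntervalIntegrable (fun v => A v (θδ v y) + molF ρ δ F v (θδ v y)) volume 0 s :=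
    flow_intervalIntegrable_s14 (G := fun u x => A u x + molF ρ δ F u x) (C := CA + CM)
      (x := fun u => θδ u y) hs (by positivity) hG' hm' hx'
  have hsub : uIcc t s ⊆ uIcc 0 s := by
    rw [uIcc_of_le hts.le, uIcc_of_le hs]
    exact Icc_subset_Icc_left ht
  have hgg := fun v i =>
    hdrift (s - t) (by linarith) (by linarith) δ hδ v (θ v s y) (θδ v y) i
  exact rescaled_bound (x := fun u => θ u s y) (x' := fun u => θδ u y) hC hts
    (hg.mono_set hsub) (hg'.mono_set hsub)
    (fun u hu => hx u ⟨ht.trans hu.1, hu.2⟩) (fun u hu => hx' u ⟨ht.trans hu.1, hu.2⟩) hgg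

end
end
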